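/- arXiv:math/0502331 — 2 statements merged into one kernel-verified Lean document; each statement's English description precedes it below -/
import Mathlib

section
/- Let I,J,M,N ⊆ {1,…,n} with |I| = |J| and |M| = |N|. (a) If every element of M∖I is strictly less than every element of I∖M and every element of J∖N is strictly less than every element of N∖J, then [I|J][M|N] = q^{|I∩M| − |J∩N|} [M|N][I|J] in A. (b) If every element of I∖M is strictly less than every element of M∖I and every element of N∖J is strictly less than every element of J∖N, then [I|J][M|N] = q^{|J∩N| − |I∩M|} [M|N][I|J] in A. -/
/-!
The quantum minors are the structure constants of quantum exterior powers, and the relations come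
from comparing two orderings of a product of two extremal vectors there.

Let `E` be generated by two families `x i`, `y i` which are quantum exterior generators
(`x i ^ 2 = 0`, `x l * x i = -q x i * x l` for `i < l`, likewise for `y`), with R-matrix exchange
relations between the families (`FRel`). The generic vectors `ξ j = ∑ i, X i j ⊗ x i` and
`η j = ∑ i, X i j ⊗ y i` of `A ⊗ E` satisfy the same relations (`FRel.coact`), and the ordered
product of the `ξ j`, `j ∈ J`, is `∑ A, [A|J] ⊗ x_A`, where `A` runs over the sets of cardinality
`|J|` and `x_A` is the ordered product of the `x i`, `i ∈ A` (`wd_coact`).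

If every element of `N \ J` is smaller than every element of `J \ N`, the correction terms in the
exchange relations all die and `ξ_J η_N = q ^ |J ∩ N| η_N ξ_J` (`FRel.extremal`). Expanding both
sides gives `column_identity`, an identity between sums of products of two minors with arbitrary
row sets `A`, `B`. To isolate `A = I`, `B = M`, put `P = I \ M`, `Q = M \ I` and apply the map
`w ↦ g (y_P w x_Q)` to the second factor, where `g` is a linear functional on an algebra `E` in
which `x i = y i = 0` for `i ∉ I ∪ M`. A word in which some index occurs three times vanishes
(`FRel.word_eq_zero`), and counting indices, together with the condition on `I` and `M`, shows that
the only terms that survive are those with `(A, B) = (I, M)` (`FRel.row_xy`, `FRel.row_yx`); there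
`y_P x_I y_M x_Q = q ^ |I ∩ M| y_P y_M x_I x_Q` (`FRel.row_main`), a scalar multiple of the top word
`∏ y * ∏ x` over `I ∪ M`. It remains to have an `E` and a `g` for which the top word is not
killed. These are built in `exists_ferm` by adding one index at a time, as for a tensor product of
one-site fermionic Fock spaces twisted by the `q`-analogues of Jordan-Wigner operators.

This proves part (b); part (a) is part (b) with the two minors interchanged.
-/

open scoped TensorProduct
open scoped Classical

noncomputable section

namespace QMat

variable (k : Type*) [Field k] (n : ℕ) (q : k)

/-- Defining relations of the quantized coordinate ring `O_q(M_n(k))`. -/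
inductive Rel : FreeAlgebra k (Fin n × Fin n) → FreeAlgebra k (Fin n × Fin n) → Prop
  | col {i l j : Fin n} (h : i < l) :
      Rel (FreeAlgebra.ι k (i, j) * FreeAlgebra.ι k (l, j))
        (q • (FreeAlgebra.ι k (l, j) * FreeAlgebra.ι k (i, j)))
  | row {i j m : Fin n} (h : j < m) :
      Rel (FreeAlgebra.ι k (i, j) * FreeAlgebra.ι k (i, m))
        (q • (FreeAlgebra.ι k (i, m) * FreeAlgebra.ι k (i, j)))
  | swap {i j l m : Fin n} (h1 : i < l) (h2 : m < j) :
      Rel (FreeAlgebra.ι k (i, j) * FreeAlgebra.ι k (l, m))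
        (FreeAlgebra.ι k (l, m) * FreeAlgebra.ι k (i, j))
  | mixed {i j l m : Fin n} (h1 : i < l) (h2 : j < m) :
      Rel (FreeAlgebra.ι k (i, j) * FreeAlgebra.ι k (l, m))
        (FreeAlgebra.ι k (l, m) * FreeAlgebra.ι k (i, j)
          + (q - q⁻¹) • (FreeAlgebra.ι k (i, m) * FreeAlgebra.ι k (l, j)))

/-- The quantized coordinate ring `A = O_q(M_n(k))`. -/
abbrev A : Type _ := RingQuot (Rel k n q)

/-- The generator `X_{ij}` of `O_q(M_n(k))`. -/
def X (i j : Fin n) : A k n q :=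
  RingQuot.mkAlgHom k (Rel k n q) (FreeAlgebra.ι k (i, j))

/-- The number of inversions `ℓ(σ)` of a permutation of `Fin t`. -/
def inversions {t : ℕ} (σ : Equiv.Perm (Fin t)) : ℕ :=
  (Finset.univ.filter fun p : Fin t × Fin t => p.1 < p.2 ∧ σ p.2 < σ p.1).card

/-- The quantum minor `[I|J]` (with junk value `0` when `|I| ≠ |J|`). -/
def qMinor (I J : Finset (Fin n)) : A k n q :=
  if h : I.card = J.card then
    ∑ σ : Equiv.Perm (Fin I.card),
      ((-q) ^ inversions σ) •
        (List.ofFn fun l : Fin I.card =>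
          X k n q (↑((I.orderIsoOfFin rfl) (σ l))) (↑((J.orderIsoOfFin h.symm) l))).prod
  else 0

/-- `ℓ(S;T) = #{(s,t) ∈ S×T : s > t}`. -/
def ell (S T : Finset (Fin n)) : ℕ :=
  ((S ×ˢ T).filter fun p => p.2 < p.1).card

/-- The `(-q)`-integer `[d]_{-q} = (-q)^{d-1} + (-q)^{d-3} + ⋯ + (-q)^{-(d-1)}`. -/
def negqInt (d : ℕ) : k :=
  ∑ s ∈ Finset.range d, (-q) ^ ((d : ℤ) - 1 - 2 * (s : ℤ))

/-- `ξ_q(I;J) = [d₁]_{-q}⋯[d_m]_{-q}` where `d_l = |[1,r_l] ∩ J| - l + 1` for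
`I = {r₁ < ⋯ < r_m}` (with junk value `1` when `|I| ≠ |J|`). -/
def xiq (I J : Finset (Fin n)) : k :=
  if _h : I.card = J.card then
    ∏ l : Fin I.card,
      negqInt k q
        ((J.filter fun x => x ≤ (↑((I.orderIsoOfFin rfl) l) : Fin n)).card - (l : ℕ))
  else 1

/-- The componentwise order `I ≤ J` on index sets of the same cardinality:
writing `I = {i₁ < ⋯ < i_t}` and `J = {j₁ < ⋯ < j_t}`, we require `i_l ≤ j_l` for all `l`. -/
def setLE (I J : Finset (Fin n)) : Prop :=
  I.card = J.card ∧
    ∀ (h : I.card = J.card) (l : Fin I.card),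
      (↑((I.orderIsoOfFin rfl) l) : Fin n) ≤ (↑((J.orderIsoOfFin h.symm) l) : Fin n)

/-- `S^♮ = (X ∩ Y) ⊔ ((X ∪ Y) ∖ S)` relative to the pair `(X, Y)`. -/
def snat (X Y S : Finset (Fin n)) : Finset (Fin n) :=
  (X ∩ Y) ∪ ((X ∪ Y) \ S)

/-- `S_≤(X,Y) = {S ⊆ X ∪ Y : X ∩ Y ⊆ S, |S| = |X|, S ≤ X}`. -/
def sLE (X Y : Finset (Fin n)) : Finset (Finset (Fin n)) :=
  (X ∪ Y).powerset.filter fun S => X ∩ Y ⊆ S ∧ S.card = X.card ∧ setLE n S X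

/-- `S_<(X,Y) = {S ⊆ X ∪ Y : X ∩ Y ⊆ S, |S| = |X|, S < X}`. -/
def sLT (X Y : Finset (Fin n)) : Finset (Finset (Fin n)) :=
  (sLE n X Y).filter fun S => S ≠ X

/-- `S_≥(X,Y) = {T ⊆ X ∪ Y : X ∩ Y ⊆ T, |T| = |X|, T ≥ X}`. -/
def sGE (X Y : Finset (Fin n)) : Finset (Finset (Fin n)) :=
  (X ∪ Y).powerset.filter fun T => X ∩ Y ⊆ T ∧ T.card = X.card ∧ setLE n X T

/-- `S_>(X,Y) = {T ⊆ X ∪ Y : X ∩ Y ⊆ T, |T| = |X|, T > X}`. -/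
def sGT (X Y : Finset (Fin n)) : Finset (Finset (Fin n)) :=
  (sGE n X Y).filter fun T => T ≠ X

/-- `L(S,X,Y) = ℓ((S∖S^♮)∪(Y∖X); X∖S) − ℓ((S∖S^♮)∪(Y∖X); S∖X)`. -/
def Lfun (S X Y : Finset (Fin n)) : ℤ :=
  (ell n ((S \ snat n X Y S) ∪ (Y \ X)) (X \ S) : ℤ)
    - (ell n ((S \ snat n X Y S) ∪ (Y \ X)) (S \ X) : ℤ)

/-- `L^♮(T,X,Y) = ℓ((T^♮∖T)∪(X∖Y); T∖X) − ℓ((T^♮∖T)∪(X∖Y); X∖T)`. -/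
def Lnat (T X Y : Finset (Fin n)) : ℤ :=
  (ell n ((snat n X Y T \ T) ∪ (X \ Y)) (T \ X) : ℤ)
    - (ell n ((snat n X Y T \ T) ∪ (X \ Y)) (X \ T) : ℤ)

/-- The form `A ⊗ A → k` given on pure tensors by `x ⊗ y ↦ f(x) g(y)`. -/
def biform (f g : A k n q →ₗ[k] k) : (A k n q ⊗[k] A k n q) →ₗ[k] k :=
  (TensorProduct.lid k k).toLinearMap ∘ₗ TensorProduct.map f g

/-- Opposite multiplication `A ⊗ A → A`, `x ⊗ y ↦ y * x`. -/
def mulRev : (A k n q ⊗[k] A k n q) →ₗ[k] A k n q :=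
  (LinearMap.mul' k (A k n q)) ∘ₗ (TensorProduct.comm k (A k n q) (A k n q)).toLinearMap

/-- `Σ (a₁ ⊗ b₁) ⊗ (a₂ ⊗ b₂)`, the regrouped double Sweedler decomposition of `a` and `b`. -/
def sweedler2 (Δ : A k n q →ₐ[k] A k n q ⊗[k] A k n q) (a b : A k n q) :
    (A k n q ⊗[k] A k n q) ⊗[k] (A k n q ⊗[k] A k n q) :=
  (TensorProduct.tensorTensorTensorComm k (A k n q) (A k n q) (A k n q) (A k n q))
    (Δ a ⊗ₜ[k] Δ b)

/-- `Δ` is the standard comultiplication: `Δ(X_{ij}) = Σ_l X_{il} ⊗ X_{lj}`. -/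
def IsComul (Δ : A k n q →ₐ[k] A k n q ⊗[k] A k n q) : Prop :=
  ∀ i j : Fin n, Δ (X k n q i j) = ∑ l : Fin n, X k n q i l ⊗ₜ[k] X k n q l j

/-- `ε` is the standard counit: `ε(X_{ij}) = δ_{ij}`. -/
def IsCounit (ε : A k n q →ₐ[k] k) : Prop :=
  ∀ i j : Fin n, ε (X k n q i j) = if i = j then 1 else 0

/-- The bilinear form `r` satisfies the coquasitriangularity conditions (1.7)(i)-(iv)
together with the prescribed values (1.9) on the generators. -/
def IsRForm (Δ : A k n q →ₐ[k] A k n q ⊗[k] A k n q) (ε : A k n q →ₐ[k] k)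
    (r : A k n q →ₗ[k] A k n q →ₗ[k] k) : Prop :=
  -- (i) `Σ r(a₁,b₁) a₂ b₂ = Σ r(a₂,b₂) b₁ a₁`
  (∀ a b : A k n q,
      (TensorProduct.lid k (A k n q))
          ((TensorProduct.map (TensorProduct.lift r) (LinearMap.mul' k (A k n q)))
            (sweedler2 k n q Δ a b)) =
        (TensorProduct.rid k (A k n q))
          ((TensorProduct.map (mulRev k n q) (TensorProduct.lift r))
            (sweedler2 k n q Δ a b))) ∧
  -- (ii) `r(ab, c) = Σ r(a,c₁) r(b,c₂)`
  (∀ a b c : A k n q, r (a * b) c = biform k n q (r a) (r b) (Δ c)) ∧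
  -- (iii) `r(a, bc) = Σ r(a₁,c) r(a₂,b)`
  (∀ a b c : A k n q, r a (b * c) = biform k n q (r.flip c) (r.flip b) (Δ a)) ∧
  -- (iv) `r(a,1) = r(1,a) = ε(a)`
  (∀ a : A k n q, r a 1 = ε a ∧ r 1 a = ε a) ∧
  -- values on generators
  (∀ i j l m : Fin n,
      r (X k n q i j) (X k n q l m) =
        if i = j ∧ l = m ∧ i = l then q
        else if i = j ∧ l = m then 1
        else if l = j ∧ m = i ∧ j < i then q - q⁻¹
        else 0)

/-- `Σ f(a₁,b₁) g(a₂,b₂)`, the convolution-type pairing of two bilinear forms. -/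
def convPair (Δ : A k n q →ₐ[k] A k n q ⊗[k] A k n q)
    (f g : A k n q →ₗ[k] A k n q →ₗ[k] k) (a b : A k n q) : k :=
  (TensorProduct.lid k k)
    ((TensorProduct.map (TensorProduct.lift f) (TensorProduct.lift g))
      (sweedler2 k n q Δ a b))

end QMat

open QMat

namespace QMatProof

/-! ### Words in two exchanging families of quantum exterior generators -/

/-- The R-matrix exchange relations for a pair of families of quantum exterior generators
`x`, `y`: each family satisfies the relations of the quantum exterior algebra, and a word in the
`x i` can be moved past a word in the `y i` by the last three relations. -/
structure FRel {k R ι : Type*} [Field k] [Ring R] [Algebra k R] [LinearOrder ι] (q : k)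
    (x y : ι → R) : Prop where
  xx0 : ∀ i, x i * x i = 0
  yy0 : ∀ i, y i * y i = 0
  xx : ∀ i l, i < l → x l * x i = (-q) • (x i * x l)
  yy : ∀ i l, i < l → y l * y i = (-q) • (y i * y l)
  xyd : ∀ i, x i * y i = q • (y i * x i)
  xy1 : ∀ i l, i < l → x i * y l = y l * x i + (q - q⁻¹) • (y i * x l)
  xy2 : ∀ i l, i < l → x l * y i = y i * x l

/-- The word `x a₁ * x a₂ * ⋯` spelled by a list of indices `[a₁, a₂, …]`. -/
def wd {R ι : Type*} [Ring R] (x : ι → R) (l : List ι) : R := (l.map x).prod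

section words
variable {k R ι : Type*} [Field k] [Ring R] [Algebra k R] [LinearOrder ι] {q : k} {x y : ι → R}

@[simp] lemma wd_nil : wd x [] = 1 := rfl
@[simp] lemma wd_cons (a : ι) (l : List ι) : wd x (a :: l) = x a * wd x l := by simp [wd]
@[simp] lemma wd_append (l l' : List ι) : wd x (l ++ l') = wd x l * wd x l' := by simp [wd]

/-- Reordering the letters of a word in one family changes it by a nonzero scalar only. -/
lemma wd_perm (hq : q ≠ 0) (hxx : ∀ i l, i < l → x l * x i = (-q) • (x i * x l))
    {l l' : List ι} (h : l.Perm l') : ∃ c : k, c ≠ 0 ∧ wd x l = c • wd x l' := by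
  induction h with
  | nil => exact ⟨1, one_ne_zero, by simp⟩
  | cons a _ ih =>
    obtain ⟨c, hc, h⟩ := ih
    exact ⟨c, hc, by simp [h]⟩
  | swap a b l =>
    rcases lt_trichotomy a b with h | h | h
    · refine ⟨-q, neg_ne_zero.2 hq, ?_⟩
      simp only [wd_cons, ← mul_assoc, hxx a b h, smul_mul_assoc]
    · exact ⟨1, one_ne_zero, by simp [h]⟩
    · refine ⟨(-q)⁻¹, inv_ne_zero (neg_ne_zero.2 hq), ?_⟩
      simp only [wd_cons, ← mul_assoc, hxx b a h, smul_mul_assoc]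
      rw [inv_smul_smul₀ (neg_ne_zero.2 hq)]
  | trans _ _ ih1 ih2 =>
    obtain ⟨c, hc, h⟩ := ih1
    obtain ⟨d, hd, h'⟩ := ih2
    exact ⟨c * d, mul_ne_zero hc hd, by rw [h, h', smul_smul]⟩

lemma wd_mul_mem (hq : q ≠ 0) (hxx : ∀ i l, i < l → x l * x i = (-q) • (x i * x l))
    (h0 : ∀ i, x i * x i = 0) {l : List ι} {a : ι} (h : a ∈ l) : wd x l * x a = 0 := by
  obtain ⟨c, -, hc⟩ := wd_perm hq hxx ((List.perm_cons_erase h).trans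
    (List.perm_append_singleton a (l.erase a)).symm)
  rw [hc]
  simp [mul_assoc, h0]

lemma wd_not_nodup (hq : q ≠ 0) (hxx : ∀ i l, i < l → x l * x i = (-q) • (x i * x l))
    (h0 : ∀ i, x i * x i = 0) {l : List ι} (h : ¬ l.Nodup) : wd x l = 0 := by
  induction l with
  | nil => simp at h
  | cons a l ih =>
    by_cases ha : a ∈ l
    · obtain ⟨c, -, hc⟩ := wd_perm hq hxx (List.perm_append_singleton a l).symm
      rw [hc]
      simp [wd_mul_mem hq hxx h0 ha]
    · have : ¬ l.Nodup := fun hl => h (List.nodup_cons.2 ⟨ha, hl⟩)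
      simp [ih this]

/-- The correction terms of `x j * y a` for `j ≠ a` contain `x a`, so multiplying by `x a` on the
right removes them. -/
lemma FRel.wd_y_x (H : FRel q x y) (hq : q ≠ 0) (a : ι) (l : List ι) (h : a ∉ l) :
    wd x l * y a * x a = y a * wd x l * x a := by
  induction l with
  | nil => simp
  | cons j l ih =>
    have hj : a ≠ j := fun e => h (by simp [e])
    have hl : a ∉ l := fun e => h (by simp [e])
    obtain ⟨c, -, hc⟩ := wd_perm hq H.xx (List.perm_append_singleton a l)
    have hc' : wd x l * x a = c • (x a * wd x l) := by simpa using hc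
    have key : x j * y a * x a = y a * x j * x a := by
      rcases lt_or_gt_of_ne hj with h1 | h1
      · rw [H.xy2 a j h1]
      · rw [H.xy1 j a h1, add_mul, smul_mul_assoc, mul_assoc (y j), H.xx0]; simp
    calc wd x (j :: l) * y a * x a = x j * (wd x l * y a * x a) := by simp [mul_assoc]
      _ = x j * y a * (wd x l * x a) := by rw [ih hl]; simp [mul_assoc]
      _ = c • ((x j * y a * x a) * wd x l) := by rw [hc']; simp [mul_assoc]
      _ = y a * x j * (wd x l * x a) := by rw [key, hc']; simp [mul_assoc]
      _ = _ := by simp [mul_assoc]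

/-- A letter `y a` moves past a word that contains `x a` at the cost of the factor `q`: bring `x a`
to the right end and use `FRel.wd_y_x` for the rest of the word. -/
lemma FRel.wd_y_mem (H : FRel q x y) (hq : q ≠ 0) (a : ι) (l : List ι) (hl : l.Nodup)
    (h : a ∈ l) : wd x l * y a = q • (y a * wd x l) := by
  obtain ⟨c, -, hc⟩ := wd_perm hq H.xx ((List.perm_cons_erase h).trans
    (List.perm_append_singleton a (l.erase a)).symm)
  have h' : a ∉ l.erase a := fun h => (List.Nodup.mem_erase_iff hl).1 h |>.1 rfl
  have := H.wd_y_x hq a _ h'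
  rw [hc]
  simp only [wd_append, wd_cons, wd_nil, mul_one, smul_mul_assoc, mul_smul_comm]
  rw [mul_assoc, H.xyd, mul_smul_comm, ← mul_assoc, this, smul_comm, mul_assoc]

lemma FRel.wd_y_word (H : FRel q x y) (hq : q ≠ 0) (l c : List ι) (hl : l.Nodup)
    (h : ∀ a ∈ c, a ∈ l) : wd x l * wd y c = q ^ c.length • (wd y c * wd x l) := by
  induction c with
  | nil => simp
  | cons a c ih =>
    have ih := ih fun b hb => h b (by simp [hb])
    rw [wd_cons, ← mul_assoc, H.wd_y_mem hq a l hl (h a (by simp)), smul_mul_assoc, mul_assoc, ih,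
      mul_smul_comm, smul_smul, List.length_cons, pow_succ', mul_assoc]

/-- The correction terms produced when `y a` moves past `x j`, `j < a`, contain `y j`; they vanish
when the prefix `w` annihilates these letters. -/
lemma FRel.wd_y_notMem (H : FRel q x y) (a : ι) (l : List ι) (ha : a ∉ l) (w : R)
    (hw : ∀ j ∈ l, j < a → w * y j = 0) : w * wd x l * y a = w * y a * wd x l := by
  induction l generalizing w with
  | nil => simp
  | cons j l ih =>
    have hj : a ≠ j := fun e => ha (by simp [e])
    have hl : a ∉ l := fun e => ha (by simp [e])
    have h1 : ∀ i ∈ l, i < a → w * x j * y i = 0 := by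
      intro i hi hia
      have hwi := hw i (by simp [hi]) hia
      rcases lt_trichotomy i j with h | h | h
      · rw [mul_assoc, H.xy2 i j h, ← mul_assoc, hwi, zero_mul]
      · subst h
        rw [mul_assoc, H.xyd, mul_smul_comm, ← mul_assoc, hwi, zero_mul, smul_zero]
      · rw [mul_assoc, H.xy1 j i h, mul_add, mul_smul_comm, ← mul_assoc, ← mul_assoc, hwi,
          hw j (by simp) (h.trans hia)]
        simp
    have h2 : w * x j * y a = w * y a * x j := by
      rcases lt_or_gt_of_ne hj with h | h
      · rw [mul_assoc, H.xy2 a j h, mul_assoc]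
      · rw [mul_assoc, H.xy1 j a h, mul_add, mul_smul_comm, ← mul_assoc, ← mul_assoc,
          hw j (by simp) h]
        simp
    rw [wd_cons, ← mul_assoc, ih hl (w * x j) h1, h2, mul_assoc]
  
/-- The version of `FRel.wd_y_notMem` for a word in the `y a` in place of one letter. -/
lemma FRel.wd_y_word' (H : FRel q x y) (l d : List ι) (w : R) (hd : ∀ a ∈ d, a ∉ l)
    (hw : ∀ a ∈ d, ∀ j ∈ l, j < a → ∀ d', w * wd y d' * y j = 0) :
    w * wd x l * wd y d = w * wd y d * wd x l := by
  induction d generalizing w with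
  | nil => simp
  | cons a d ih =>
    have h1 := H.wd_y_notMem a l (hd a (by simp)) w fun j hj hja => by
      simpa using hw a (by simp) j hj hja []
    rw [wd_cons, ← mul_assoc, h1, ← mul_assoc,
      ih (w * y a) (fun b hb => hd b (by simp [hb])) (fun b hb j hj hjb d' => by
        have := hw b (by simp [hb]) j hj hjb (a :: d')
        rwa [wd_cons, ← mul_assoc] at this)]

/-- Quasicommutation of two extremal words. The word `m` consists of a part `c` contained in `l`,
whose letters contribute a factor `q` each, and a part `d` disjoint from `l`, whose letters move
without any factor: by `hlt` the correction terms contain some `y j`, `j ∈ c`, twice. -/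
lemma FRel.extremal (H : FRel q x y) (hq : q ≠ 0) (l m c d : List ι) (hl : l.Nodup)
    (hm : m.Perm (c ++ d)) (hc : ∀ a ∈ c, a ∈ l) (hd : ∀ a ∈ d, a ∉ l)
    (hlt : ∀ a ∈ d, ∀ j ∈ l, j ∉ c → a < j) :
    wd x l * wd y m = q ^ c.length • (wd y m * wd x l) := by
  obtain ⟨u, -, hu⟩ := wd_perm hq H.yy hm
  have h2 := H.wd_y_word' l d (wd y c) hd fun a ha j hj hja d' => by
    rw [← wd_append]
    refine wd_mul_mem hq H.yy H.yy0 ?_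
    by_contra hn
    have := hlt a ha j hj fun h => hn (by simp [h])
    exact absurd hja this.not_gt
  rw [hu, wd_append, mul_smul_comm, ← mul_assoc, H.wd_y_word hq l c hl hc, smul_mul_assoc, h2,
    smul_mul_assoc, smul_comm]

/-- The span of the words `x_a * y_b` with all `x` letters on the left and with the multiset
`μ` as their multiset of indices. The exchange relations preserve this multiset. -/
def wtSpan (k : Type*) [Field k] [Algebra k R] (x y : ι → R) (μ : Multiset ι) : Submodule k R :=
  Submodule.span k {r | ∃ l l' : List ι, ((l ++ l' : List ι) : Multiset ι) = μ ∧
    r = wd x l * wd y l'}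

lemma FRel.y_x (H : FRel q x y) (hq : q ≠ 0) (b i : ι) : ∃ c d : k,
    y b * x i = c • (x i * y b) + d • (x b * y i) := by
  rcases lt_trichotomy i b with h | h | h
  · refine ⟨1, -(q - q⁻¹), ?_⟩
    rw [H.xy1 i b h, H.xy2 i b h]
    module
  · subst h
    exact ⟨q⁻¹, 0, by rw [H.xyd, inv_smul_smul₀ hq]; simp⟩
  · exact ⟨1, 0, by rw [H.xy2 b i h]; simp⟩

lemma wd_mem_wtSpan (l l' : List ι) :
    wd x l * wd y l' ∈ wtSpan k x y ((l ++ l' : List ι) : Multiset ι) :=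
  Submodule.subset_span ⟨l, l', rfl, rfl⟩

lemma mul_y_mem (μ : Multiset ι) (i : ι) {r : R} (hr : r ∈ wtSpan k x y μ) :
    r * y i ∈ wtSpan k x y (i ::ₘ μ) := by
  induction hr using Submodule.span_induction with
  | mem r h =>
    obtain ⟨l, l', rfl, rfl⟩ := h
    have := wd_mem_wtSpan (k := k) (x := x) (y := y) l (l' ++ [i])
    rw [← List.append_assoc] at this
    rw [Multiset.coe_eq_coe.2 (List.perm_append_singleton i (l ++ l'))] at this
    simpa [mul_assoc] using this
  | zero => simp
  | add a b _ _ ha hb => rw [add_mul]; exact add_mem ha hb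
  | smul c a _ ha => rw [smul_mul_assoc]; exact Submodule.smul_mem _ _ ha

lemma FRel.mul_x_mem (H : FRel q x y) (hq : q ≠ 0) (μ : Multiset ι) (i : ι) {r : R}
    (hr : r ∈ wtSpan k x y μ) : r * x i ∈ wtSpan k x y (i ::ₘ μ) := by
  induction hr using Submodule.span_induction with
  | mem r h =>
    obtain ⟨l, l', rfl, rfl⟩ := h
    induction l' using List.reverseRecOn generalizing i with
    | nil =>
      have := wd_mem_wtSpan (k := k) (x := x) (y := y) (l ++ [i]) []
      simp only [List.append_nil, Multiset.coe_eq_coe.2 (List.perm_append_singleton i l)] at this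
      simpa using this
    | append_singleton l' b ih =>
      obtain ⟨c, d, h⟩ := H.y_x hq b i
      have e : wd x l * wd y (l' ++ [b]) * x i =
          c • (wd x l * wd y l' * x i * y b) + d • (wd x l * wd y l' * x b * y i) := by
        simp only [wd_append, wd_cons, wd_nil, mul_one, mul_assoc, h, mul_add, mul_smul_comm]
      have hb : ((l ++ (l' ++ [b]) : List ι) : Multiset ι) =
          b ::ₘ ((l ++ l' : List ι) : Multiset ι) := by
        rw [← List.append_assoc, Multiset.coe_eq_coe.2 (List.perm_append_singleton b (l ++ l'))]
        simp
      rw [e, hb]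
      refine add_mem (Submodule.smul_mem _ _ ?_) (Submodule.smul_mem _ _ ?_)
      · rw [Multiset.cons_swap]
        exact mul_y_mem _ _ (ih i)
      · exact mul_y_mem _ _ (ih b)
  | zero => simp
  | add a b _ _ ha hb => rw [add_mul]; exact add_mem ha hb
  | smul c a _ ha => rw [smul_mul_assoc]; exact Submodule.smul_mem _ _ ha

lemma mul_wd_y_mem (μ : Multiset ι) (l : List ι) {r : R} (hr : r ∈ wtSpan k x y μ) :
    r * wd y l ∈ wtSpan k x y (l + μ) := by
  induction l generalizing r μ with
  | nil => simpa using hr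
  | cons a l ih =>
    have := ih _ (mul_y_mem _ a hr)
    rw [wd_cons, ← mul_assoc]
    rwa [Multiset.add_cons, ← Multiset.cons_add, Multiset.cons_coe] at this

lemma FRel.mul_wd_x_mem (H : FRel q x y) (hq : q ≠ 0) (μ : Multiset ι) (l : List ι) {r : R}
    (hr : r ∈ wtSpan k x y μ) : r * wd x l ∈ wtSpan k x y (l + μ) := by
  induction l generalizing r μ with
  | nil => simpa using hr
  | cons a l ih =>
    have := ih _ (H.mul_x_mem hq _ a hr)
    rw [wd_cons, ← mul_assoc]
    rwa [Multiset.add_cons, ← Multiset.cons_add, Multiset.cons_coe] at this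

lemma FRel.wtSpan_eq_zero (H : FRel q x y) (hq : q ≠ 0) (μ : Multiset ι) (i : ι)
    (hi : 2 < μ.count i) {r : R} (hr : r ∈ wtSpan k x y μ) : r = 0 := by
  induction hr using Submodule.span_induction with
  | mem r h =>
    obtain ⟨l, l', rfl, rfl⟩ := h
    by_cases h : l.Nodup
    · by_cases h' : l'.Nodup
      · rw [List.nodup_iff_count_le_one] at h h'
        have := h i
        have := h' i
        simp only [Multiset.coe_count, List.count_append] at hi
        omega
      · rw [wd_not_nodup hq H.yy H.yy0 h', mul_zero]
    · rw [wd_not_nodup hq H.xx H.xx0 h, zero_mul]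
  | zero => rfl
  | add a b _ _ ha hb => rw [ha, hb, add_zero]
  | smul c a _ ha => rw [ha, smul_zero]

/-- A word in which some index occurs more than twice vanishes, since it can be rewritten as a
combination of words `x_a * y_b`, in which that index is repeated in `a` or in `b`. -/
lemma FRel.word_eq_zero (H : FRel q x y) (hq : q ≠ 0) (p a b c : List ι) (i : ι)
    (hi : 2 < p.count i + a.count i + b.count i + c.count i) :
    wd y p * wd x a * wd y b * wd x c = 0 := by
  have h1 := mul_wd_y_mem (k := k) (x := x) _ p (wd_mem_wtSpan (k := k) (x := x) (y := y) [] [])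
  have h2 := H.mul_wd_x_mem hq _ c (mul_wd_y_mem _ b (H.mul_wd_x_mem hq _ a h1))
  simp only [wd_nil, one_mul] at h2
  refine H.wtSpan_eq_zero hq _ i ?_ h2
  simp
  omega

end words

/-! ### Sorting words and expanding products of sums -/

section expand

/-- The number of inversions of a list, counted from the left. -/
def linv {n : ℕ} : List (Fin n) → ℕ
  | [] => 0
  | a :: l => l.countP (· < a) + linv l

lemma wd_orderedInsert {k R : Type*} [Field k] [Ring R] [Algebra k R] {n : ℕ} {q : k}
    {x : Fin n → R} (hxx : ∀ i l, i < l → x l * x i = (-q) • (x i * x l)) (a : Fin n)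
    (l : List (Fin n)) (hl : l.Pairwise (· ≤ ·)) (ha : a ∉ l) :
    x a * wd x l = (-q) ^ (l.countP (· < a)) • wd x (l.orderedInsert (· ≤ ·) a) := by
  induction l with
  | nil => simp
  | cons b l ih =>
    have hab : a ≠ b := fun e => ha (by simp [e])
    rcases lt_or_gt_of_ne hab with h | h
    · rw [List.orderedInsert_cons, if_pos h.le, List.countP_eq_zero.2]
      · simp
      · intro c hc
        have : b ≤ c := by
          rcases List.mem_cons.1 hc with h | h
          · exact h.ge
          · exact (List.pairwise_cons.1 hl).1 _ h
        simpa using (h.le.trans this)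
    · rw [List.orderedInsert_cons, if_neg h.not_ge, List.countP_cons_of_pos (by simpa using h)]
      rw [wd_cons, wd_cons, ← mul_assoc, hxx b a h, smul_mul_assoc, mul_assoc,
        ih (List.pairwise_cons.1 hl).2 (fun e => ha (by simp [e])), mul_smul_comm, smul_smul,
        pow_succ']

lemma wd_sort {k R : Type*} [Field k] [Ring R] [Algebra k R] {n : ℕ} {q : k}
    {x : Fin n → R} (hxx : ∀ i l, i < l → x l * x i = (-q) • (x i * x l))
    (l : List (Fin n)) (hl : l.Nodup) :
    wd x l = (-q) ^ linv l • wd x (l.insertionSort (· ≤ ·)) := by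
  induction l with
  | nil => simp [linv]
  | cons a l ih =>
    obtain ⟨h1, h2⟩ := List.nodup_cons.1 hl
    rw [wd_cons, ih h2, mul_smul_comm, wd_orderedInsert hxx a _ (List.pairwise_insertionSort _ _)
      (by simpa using h1), smul_smul, linv, List.insertionSort_cons, ← pow_add, add_comm,
      (List.perm_insertionSort _ l).countP_eq]

lemma countP_ofFn {α : Type*} {r : ℕ} (p : α → Bool) (v : Fin r → α) :
    (List.ofFn v).countP p = ∑ i, if p (v i) then 1 else 0 := by
  induction r with
  | zero => simp
  | succ r ih => rw [List.ofFn_succ, List.countP_cons, ih, Fin.sum_univ_succ, add_comm]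

lemma linv_ofFn {n r : ℕ} (u : Fin r → Fin n) : linv (List.ofFn u) =
    (Finset.univ.filter fun p : Fin r × Fin r => p.1 < p.2 ∧ u p.2 < u p.1).card := by
  induction r with
  | zero => simp [linv]
  | succ r ih =>
    rw [List.ofFn_succ, linv, ih, Finset.card_filter, Finset.card_filter, Fintype.sum_prod_type,
      Fintype.sum_prod_type, Fin.sum_univ_succ]
    congr 1
    · rw [Fin.sum_univ_succ, countP_ofFn]
      simp
    · refine Finset.sum_congr rfl fun i _ => ?_
      rw [Fin.sum_univ_succ]
      simp only [Fin.succ_lt_succ_iff, Fin.not_lt_zero, false_and, if_false, zero_add]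

/-- The product of the vectors `∑ i, X i c * x i` expanded over all choices of row indices, when the
coefficients commute with the `x i`. -/
lemma prod_expand {R : Type*} [Ring R] {n : ℕ} (X : Fin n → Fin n → R) (x : Fin n → R)
    (hc : ∀ i j l, x l * X i j = X i j * x l) (r : ℕ) (c : Fin r → Fin n) :
    wd (fun j => ∑ i, X i j * x i) (List.ofFn c) =
      ∑ u : Fin r → Fin n, (List.ofFn fun l => X (u l) (c l)).prod * wd x (List.ofFn u) := by
  induction r with
  | zero => simp
  | succ r ih =>
    rw [List.ofFn_succ, wd_cons, ih, ← (Fin.consEquiv fun _ => Fin n).sum_comp,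
      Fintype.sum_prod_type, Finset.sum_mul_sum]
    refine Finset.sum_congr rfl fun i _ => Finset.sum_congr rfl fun u _ => ?_
    have hcomm : ∀ L : List (Fin r), x i * (L.map fun l => X (u l) (c l.succ)).prod =
        (L.map fun l => X (u l) (c l.succ)).prod * x i := by
      intro L
      induction L with
      | nil => simp
      | cons a L ih => simp only [List.map_cons, List.prod_cons, ← mul_assoc, hc]
                       simp only [mul_assoc, ih]
    have h2 := hcomm (List.finRange r)
    rw [← List.ofFn_eq_map] at h2
    simp only [Fin.consEquiv_apply, List.ofFn_succ, Fin.cons_zero, Fin.cons_succ, List.prod_cons,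
      wd_cons, mul_assoc]
    rw [← mul_assoc (x i), h2]
    simp only [mul_assoc]

end expand

/-! ### The coaction of `O_q(M_n(k))` -/

section coact
variable {k : Type*} [Field k] {n : ℕ} {q : k}

/-- Two double sums agree if they agree on the diagonal and on each pair of transposed terms. -/
lemma sum_pairs {M : Type*} [AddCommGroup M] (g h : Fin n → Fin n → M)
    (hd : ∀ i, g i i = h i i) (ho : ∀ i l, i < l → g i l + g l i = h i l + h l i) :
    ∑ i, ∑ l, g i l = ∑ i, ∑ l, h i l := by
  have key : ∀ f : Fin n → Fin n → M, ∑ i, ∑ l, f i l = ∑ i, f i i +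
      ∑ i, ∑ l, if i < l then f i l + f l i else 0 := by
    intro f
    have h1 : ∑ i, f i i = ∑ i, ∑ l, if i = l then f i l else 0 := by simp
    have h2 : (∑ i, ∑ l, if i < l then f i l + f l i else 0) =
        (∑ i, ∑ l, if i < l then f i l else 0) + ∑ i, ∑ l, if l < i then f i l else 0 := by
      rw [Finset.sum_comm (f := fun i l => if l < i then f i l else 0), ← Finset.sum_add_distrib]
      refine Finset.sum_congr rfl fun i _ => ?_
      rw [← Finset.sum_add_distrib]
      refine Finset.sum_congr rfl fun l _ => ?_
      split_ifs <;> simp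
    rw [h1, h2, ← Finset.sum_add_distrib, ← Finset.sum_add_distrib]
    refine Finset.sum_congr rfl fun i _ => ?_
    rw [← Finset.sum_add_distrib, ← Finset.sum_add_distrib]
    refine Finset.sum_congr rfl fun l _ => ?_
    rcases lt_trichotomy i l with h | h | h
    · simp [h, h.ne, h.not_gt]
    · simp [h]
    · simp [h, h.ne', h.not_gt]
  rw [key g, key h]
  congr 1
  · exact Finset.sum_congr rfl fun i _ => hd i
  · refine Finset.sum_congr rfl fun i _ => Finset.sum_congr rfl fun l _ => ?_
    split_ifs with hil
    · exact ho i l hil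
    · rfl

lemma rel_col {i l : Fin n} (j : Fin n) (h : i < l) :
    X k n q i j * X k n q l j = q • (X k n q l j * X k n q i j) := by
  simpa [X] using RingQuot.mkAlgHom_rel k (Rel.col (k := k) (q := q) (j := j) h)

lemma rel_row (i : Fin n) {j m : Fin n} (h : j < m) :
    X k n q i j * X k n q i m = q • (X k n q i m * X k n q i j) := by
  simpa [X] using RingQuot.mkAlgHom_rel k (Rel.row (k := k) (q := q) (i := i) h)

lemma rel_swap {i j l m : Fin n} (h1 : i < l) (h2 : m < j) :
    X k n q i j * X k n q l m = X k n q l m * X k n q i j := by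
  simpa [X] using RingQuot.mkAlgHom_rel k (Rel.swap (k := k) (q := q) h1 h2)

lemma rel_mixed {i j l m : Fin n} (h1 : i < l) (h2 : j < m) :
    X k n q i j * X k n q l m = X k n q l m * X k n q i j
      + (q - q⁻¹) • (X k n q i m * X k n q l j) := by
  simpa [X] using RingQuot.mkAlgHom_rel k (Rel.mixed (k := k) (q := q) h1 h2)

variable {R : Type*} [Ring R] [Algebra k R]

/-- The generic vector `∑ i, X i j * x i`: the image of the generator `x j` under the coaction of
`O_q(M_n(k))`, with coefficients evaluated in `R` through `φ`. -/
def coact (φ : A k n q →ₐ[k] R) (x : Fin n → R) (j : Fin n) : R := ∑ i, φ (X k n q i j) * x i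

lemma coact_mul (φ : A k n q →ₐ[k] R) (x y : Fin n → R)
    (hc : ∀ i j l, x l * φ (X k n q i j) = φ (X k n q i j) * x l) (j m : Fin n) :
    coact φ x j * coact φ y m = ∑ i, ∑ l, φ (X k n q i j * X k n q l m) * (x i * y l) := by
  rw [coact, coact, Finset.sum_mul_sum]
  refine Finset.sum_congr rfl fun i _ => Finset.sum_congr rfl fun l _ => ?_
  rw [map_mul, mul_assoc, ← mul_assoc (x i), hc]
  simp only [mul_assoc]

lemma coact_sq (φ : A k n q →ₐ[k] R) (x : Fin n → R)
    (hxx : ∀ i l, i < l → x l * x i = (-q) • (x i * x l)) (hx0 : ∀ i, x i * x i = 0)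
    (hc : ∀ i j l, x l * φ (X k n q i j) = φ (X k n q i j) * x l) (j : Fin n) :
    coact φ x j * coact φ x j = 0 := by
  rw [coact_mul φ x x hc]
  trans ∑ i : Fin n, ∑ l : Fin n, (0 : R)
  · refine sum_pairs _ _ (fun i => by rw [hx0, mul_zero]) fun i l h => ?_
    rw [hxx i l h, rel_col j h]
    simp
  · simp

lemma coact_anti (hq : q ≠ 0) (φ : A k n q →ₐ[k] R) (x : Fin n → R)
    (hxx : ∀ i l, i < l → x l * x i = (-q) • (x i * x l)) (hx0 : ∀ i, x i * x i = 0)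
    (hc : ∀ i j l, x l * φ (X k n q i j) = φ (X k n q i j) * x l) (j m : Fin n) (h : j < m) :
    coact φ x m * coact φ x j = (-q) • (coact φ x j * coact φ x m) := by
  rw [coact_mul φ x x hc, coact_mul φ x x hc]
  simp only [Finset.smul_sum]
  refine sum_pairs _ _ (fun i => by rw [hx0]; simp) fun i l hil => ?_
  rw [hxx i l hil, rel_swap hil h, rel_mixed hil h, rel_swap hil h]
  simp only [map_add, map_smul, add_mul, smul_add, smul_mul_assoc, mul_smul_comm, smul_smul]
  match_scalars <;> field_simp <;> ring

/-- The exchange relations are compatible with the coaction of `O_q(M_n(k))`. -/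
lemma FRel.coact {x y : Fin n → R} (hq : q ≠ 0) (H : FRel q x y) (φ : A k n q →ₐ[k] R)
    (hx : ∀ i j l, x l * φ (X k n q i j) = φ (X k n q i j) * x l)
    (hy : ∀ i j l, y l * φ (X k n q i j) = φ (X k n q i j) * y l) :
    FRel q (coact φ x) (coact φ y) where
  xx0 := coact_sq φ x H.xx H.xx0 hx
  yy0 := coact_sq φ y H.yy H.yy0 hy
  xx := coact_anti hq φ x H.xx H.xx0 hx
  yy := coact_anti hq φ y H.yy H.yy0 hy
  xyd j := by
    rw [coact_mul φ x y hx, coact_mul φ y x hy]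
    simp only [Finset.smul_sum]
    refine sum_pairs _ _ (fun i => by rw [H.xyd, mul_smul_comm]) fun i l hil => ?_
    rw [H.xy1 i l hil, H.xy2 i l hil, rel_col j hil]
    simp only [map_add, map_smul, add_mul, mul_add, smul_add, smul_mul_assoc, mul_smul_comm, smul_smul]
    match_scalars <;> field_simp <;> ring
  xy1 j m h := by
    rw [coact_mul φ x y hx, coact_mul φ y x hy, coact_mul φ y x hy]
    simp only [Finset.smul_sum, ← Finset.sum_add_distrib]
    refine sum_pairs _ _ (fun i => ?_) fun i l hil => ?_
    · rw [H.xyd, rel_row i h]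
      simp only [map_add, map_smul, add_mul, mul_add, smul_add, smul_mul_assoc, mul_smul_comm, smul_smul]
      match_scalars <;> field_simp <;> ring
    · rw [H.xy1 i l hil, H.xy2 i l hil, rel_mixed hil h, rel_swap hil h]
      simp only [map_add, map_smul, add_mul, mul_add, smul_add, smul_mul_assoc, mul_smul_comm, smul_smul]
      match_scalars <;> field_simp <;> ring
  xy2 j m h := by
    rw [coact_mul φ x y hx, coact_mul φ y x hy]
    refine sum_pairs _ _ (fun i => ?_) fun i l hil => ?_
    · rw [H.xyd, rel_row i h]
      simp only [map_add, map_smul, add_mul, mul_add, smul_add, smul_mul_assoc, mul_smul_comm, smul_smul]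
    · rw [H.xy1 i l hil, H.xy2 i l hil, rel_mixed hil h, rel_swap hil h]
      simp only [map_add, map_smul, add_mul, mul_add, smul_add, smul_mul_assoc, mul_smul_comm, smul_smul]
      match_scalars <;> field_simp <;> ring

end coact

/-! ### Quantum minors as coefficients -/

section minors
variable {k : Type*} [Field k] {n : ℕ} {q : k}

lemma qMinor_eq (A J : Finset (Fin n)) (r : ℕ) (hA : A.card = r) (hJ : J.card = r) :
    qMinor k n q A J = ∑ σ : Equiv.Perm (Fin r), ((-q) ^ inversions σ) •
      (List.ofFn fun l : Fin r =>
        X k n q (A.orderEmbOfFin hA (σ l)) (J.orderEmbOfFin hJ l)).prod := by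
  subst hA
  rw [qMinor, dif_pos hJ.symm]
  rfl

lemma wd_emb {R : Type*} [Ring R] [Algebra k R] {x : Fin n → R}
    (hxx : ∀ i l, i < l → x l * x i = (-q) • (x i * x l)) (A : Finset (Fin n)) (r : ℕ)
    (hA : A.card = r) (σ : Equiv.Perm (Fin r)) :
    wd x (List.ofFn fun l => A.orderEmbOfFin hA (σ l)) =
      (-q) ^ inversions σ • wd x (A.sort (· ≤ ·)) := by
  have hinj : Function.Injective fun l => A.orderEmbOfFin hA (σ l) :=
    (A.orderEmbOfFin hA).injective.comp σ.injective
  have hnd := List.nodup_ofFn.2 hinj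
  rw [wd_sort hxx _ hnd, linv_ofFn]
  congr 1
  · congr 2
    simp
  · congr 1
    refine List.Perm.eq_of_pairwise' (r := (· ≤ ·)) (List.pairwise_insertionSort _ _)
      (Finset.pairwise_sort _ _) ?_
    refine (List.perm_insertionSort _ _).trans ?_
    refine List.perm_of_nodup_nodup_toFinset_eq hnd (Finset.sort_nodup _ _) ?_
    ext a
    simp only [List.mem_toFinset, List.mem_ofFn', Finset.mem_sort]
    have := Finset.range_orderEmbOfFin A hA
    rw [← Finset.mem_coe, ← this]
    exact Iff.of_eq (congrArg (a ∈ ·) (σ.surjective.range_comp (A.orderEmbOfFin hA)))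

/-- The ordered product of the generic vectors with index in `J` has the quantum minors `[A|J]` as its
coefficients. Choices of row indices with a repetition contribute `0`; the others are grouped by
the set `A` of their values. -/
lemma wd_coact {R : Type*} [Ring R] [Algebra k R] (hq : q ≠ 0) {x : Fin n → R}
    (hxx : ∀ i l, i < l → x l * x i = (-q) • (x i * x l)) (hx0 : ∀ i, x i * x i = 0)
    (φ : A k n q →ₐ[k] R) (hc : ∀ i j l, x l * φ (X k n q i j) = φ (X k n q i j) * x l)
    (J : Finset (Fin n)) :
    wd (coact φ x) (J.sort (· ≤ ·)) =
      ∑ A ∈ Finset.powersetCard J.card Finset.univ,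
        φ (qMinor k n q A J) * wd x (A.sort (· ≤ ·)) := by
  have hs : J.sort (· ≤ ·) = List.ofFn (J.orderEmbOfFin rfl) := by
    rw [List.ofFn_eq_map, Finset.listMap_orderEmbOfFin_finRange]
  change wd (fun j => ∑ i, φ (X k n q i j) * x i) _ = _
  rw [hs, prod_expand _ _ hc]
  set f : (Fin J.card → Fin n) → R := fun u =>
    (List.ofFn fun l => φ (X k n q (u l) (J.orderEmbOfFin rfl l))).prod * wd x (List.ofFn u) with hf
  have h1 : ∑ u, f u = ∑ u ∈ Finset.univ.filter fun u => Function.Injective u, f u := by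
    refine (Finset.sum_subset (Finset.filter_subset _ _) fun u _ hu => ?_).symm
    have : ¬ (List.ofFn u).Nodup := fun h => hu (by simpa using List.nodup_ofFn.1 h)
    simp only [hf, wd_not_nodup hq hxx hx0 this, mul_zero]
  rw [h1, ← Finset.sum_fiberwise_of_maps_to (g := fun u => Finset.univ.image u)
    (t := Finset.powersetCard J.card Finset.univ)]
  · refine Finset.sum_congr rfl fun A hA => ?_
    have hA : A.card = J.card := (Finset.mem_powersetCard.1 hA).2
    rw [qMinor_eq A J _ hA rfl, map_sum, Finset.sum_mul]
    symm
    refine Finset.sum_bij (fun σ _ => fun l => A.orderEmbOfFin hA (σ l)) ?_ ?_ ?_ ?_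
    · intro σ _
      have hinj : Function.Injective fun l => A.orderEmbOfFin hA (σ l) :=
        (A.orderEmbOfFin hA).injective.comp σ.injective
      simp only [Finset.mem_filter, Finset.mem_univ, true_and]
      refine ⟨hinj, Finset.eq_of_subset_of_card_le ?_ ?_⟩
      · intro a ha
        obtain ⟨l, -, rfl⟩ := Finset.mem_image.1 ha
        exact Finset.orderEmbOfFin_mem _ _ _
      · rw [Finset.card_image_of_injective _ hinj]
        simp [hA]
    · intro σ _ τ _ h
      ext l
      have := (A.orderEmbOfFin hA).injective (congrFun h l)
      rw [this]
    · intro u hu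
      simp only [Finset.mem_filter, Finset.mem_univ, true_and] at hu
      obtain ⟨hu, rfl⟩ := hu
      have h : ∀ l, ∃ m, (Finset.univ.image u).orderEmbOfFin hA m = u l := by
        intro l
        have : u l ∈ Set.range ((Finset.univ.image u).orderEmbOfFin hA) := by
          rw [Finset.range_orderEmbOfFin]; simp
        exact this
      choose τ hτ using h
      have hinj : Function.Injective τ := fun a b hab => hu (by rw [← hτ, ← hτ, hab])
      exact ⟨Equiv.ofBijective τ (Finite.injective_iff_bijective.1 hinj), Finset.mem_univ _,
        funext hτ⟩
    · intro σ _
      simp only [hf]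
      rw [wd_emb hxx, map_smul, map_list_prod, List.map_ofFn, smul_mul_assoc, mul_smul_comm]
      rfl
  · intro u hu
    simp only [Finset.mem_filter, Finset.mem_univ, true_and] at hu
    simp [Finset.mem_powersetCard, Finset.card_image_of_injective _ hu]

end minors

/-! ### A nonzero model of the exchange relations -/

section fock

/-- A pair of families satisfying `FRel`, together with operators that are needed to adjoin one more
index, larger than all those in use. The operators `K₁` and `K₂` count the letters `x` and `y` in
powers of `-q`, and `F` turns an `x` letter into a `y` letter. -/
structure Ferm {k E : Type*} [Field k] [Ring E] [Algebra k E] {n : ℕ} (q : k)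
    (x y : Fin n → E) (K₁ K₂ F : E) : Prop extends FRel q x y where
  k1x : ∀ i, K₁ * x i = (-q) • (x i * K₁)
  k1y : ∀ i, K₁ * y i = y i * K₁
  k2x : ∀ i, K₂ * x i = x i * K₂
  k2y : ∀ i, K₂ * y i = (-q) • (y i * K₂)
  xF : ∀ i, x i * F = F * x i + (q - q⁻¹) • (y i * K₁)
  Fy : ∀ i, F * y i = (-q) • (y i * F)
  k12 : K₁ * K₂ = K₂ * K₁
  Fk1 : F * K₁ = (-q) • (K₁ * F)
  k2F : K₂ * F = (-q) • (F * K₂)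

/-- The operators of one site: `a` and `b` are the generators `x` and `y` for a single index, and
`c`, `d`, `f` play the roles of `K₁`, `K₂`, `F` for this index. -/
structure Site {k G : Type*} [Field k] [Ring G] [Algebra k G] (q : k) (a b c d f : G) : Prop where
  aa : a * a = 0
  bb : b * b = 0
  ab : a * b = q • (b * a)
  ca : c * a = (-q) • (a * c)
  cb : c * b = b * c
  da : d * a = a * d
  db : d * b = (-q) • (b * d)
  af : a * f = f * a + (q - q⁻¹) • (b * c)
  fb : f * b = (-q) • (b * f)
  cd : c * d = d * c
  fc : f * c = (-q) • (c * f)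
  df : d * f = (-q) • (f * d)

set_option maxHeartbeats 4000000 in
/-- The one-site operators act on the four-dimensional space with basis `1, x, y, yx`. The entry
`(3, 0)` of an operator is its coefficient from `1` to `yx`; it is `1` for `b * a`, and right
multiplication by `c` and `d` does not affect it. -/
lemma exists_site {k : Type*} [Field k] (q : k) :
    ∃ (a b c d f : Matrix (Fin 4) (Fin 4) k), Site q a b c d f ∧
      (∀ g : Matrix (Fin 4) (Fin 4) k, (g * c) 3 0 = g 3 0) ∧
      (∀ g : Matrix (Fin 4) (Fin 4) k, (g * d) 3 0 = g 3 0) ∧ (b * a) 3 0 = 1 := by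
  refine ⟨!![0, 0, 0, 0; 1, 0, 0, 0; 0, 0, 0, 0; 0, 0, q, 0],
    !![0, 0, 0, 0; 0, 0, 0, 0; 1, 0, 0, 0; 0, 1, 0, 0],
    !![1, 0, 0, 0; 0, -q, 0, 0; 0, 0, 1, 0; 0, 0, 0, -q],
    !![1, 0, 0, 0; 0, 1, 0, 0; 0, 0, -q, 0; 0, 0, 0, -q],
    !![0, 0, 0, 0; 0, 0, 0, 0; 0, -(q - q⁻¹), 0, 0; 0, 0, 0, 0], ?_, ?_, ?_, ?_⟩
  · constructor <;> ext i j <;> fin_cases i <;> fin_cases j <;>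
      simp [Matrix.mul_apply, Fin.sum_univ_four] <;> ring
  · intro g; simp [Matrix.mul_apply, Fin.sum_univ_four]
  · intro g; simp [Matrix.mul_apply, Fin.sum_univ_four]
  · simp [Matrix.mul_apply, Fin.sum_univ_four]

open Algebra.TensorProduct in
/-- Adjoining an index `m` above all those in use. The twists by `K₁`, `K₂` and the extra term
`F ⊗ a` in the new `y m` produce the exchange relations between `m` and the smaller indices. -/
lemma Ferm.step {k E G : Type*} [Field k] [Ring E] [Algebra k E] [Ring G] [Algebra k G] {n : ℕ}
    {q : k} (hq : q ≠ 0) {x y : Fin n → E} {K₁ K₂ F : E} {a b c d f : G} (H : Ferm q x y K₁ K₂ F)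
    (S : Site q a b c d f) (m : Fin n) (hm : ∀ i, m ≤ i → x i = 0 ∧ y i = 0) :
    Ferm q (Function.update (fun i => x i ⊗ₜ[k] (1 : G)) m (K₁ ⊗ₜ a))
      (Function.update (fun i => y i ⊗ₜ[k] (1 : G)) m (K₂ ⊗ₜ b + F ⊗ₜ a))
      (K₁ ⊗ₜ c) (K₂ ⊗ₜ d) (F ⊗ₜ c + K₂ ⊗ₜ f) := by
  set x' := Function.update (fun i => x i ⊗ₜ[k] (1 : G)) m (K₁ ⊗ₜ a) with hx'
  set y' := Function.update (fun i => y i ⊗ₜ[k] (1 : G)) m (K₂ ⊗ₜ b + F ⊗ₜ a) with hy'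
  have xm : x' m = K₁ ⊗ₜ a := by simp [hx']
  have ym : y' m = K₂ ⊗ₜ b + F ⊗ₜ a := by simp [hy']
  have xo : ∀ i, i ≠ m → x' i = x i ⊗ₜ[k] (1 : G) := fun i h => by simp [hx', h]
  have yo : ∀ i, i ≠ m → y' i = y i ⊗ₜ[k] (1 : G) := fun i h => by simp [hy', h]
  have xg : ∀ i, m < i → x' i = 0 := fun i h => by simp [xo i h.ne', (hm i h.le).1]
  have yg : ∀ i, m < i → y' i = 0 := fun i h => by simp [yo i h.ne', (hm i h.le).2]
  constructor
  · constructor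
    · intro i
      by_cases h : i = m
      · subst h; simp [xm, S.aa]
      · simp [xo i h, H.xx0]
    · intro i
      by_cases h : i = m
      · subst h
        simp only [ym, add_mul, mul_add, tmul_mul_tmul, S.aa, S.bb, S.ab, H.k2F]
        simp only [← TensorProduct.smul_tmul', TensorProduct.tmul_smul, TensorProduct.tmul_zero]
        module
      · simp [yo i h, H.yy0]
    · intro i l h
      rcases lt_trichotomy l m with hl | rfl | hl
      · simp [xo i (h.trans hl).ne, xo l hl.ne, H.xx i l h, TensorProduct.smul_tmul',
          TensorProduct.neg_tmul]
      · simp [xo i h.ne, xm, H.k1x, TensorProduct.smul_tmul',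
          TensorProduct.neg_tmul]
      · simp [xg l hl]
    · intro i l h
      rcases lt_trichotomy l m with hl | rfl | hl
      · simp [yo i (h.trans hl).ne, yo l hl.ne, H.yy i l h, TensorProduct.smul_tmul',
          TensorProduct.neg_tmul]
      · simp [yo i h.ne, ym, H.k2y, H.Fy, TensorProduct.smul_tmul', TensorProduct.neg_tmul,
          add_mul, mul_add]
      · simp [yg l hl]
    · intro i
      by_cases h : i = m
      · subst h
        simp only [xm, ym, add_mul, mul_add, tmul_mul_tmul, S.aa, S.ab, H.k12]
        simp only [TensorProduct.tmul_smul, TensorProduct.tmul_zero]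
        module
      · simp [yo i h, xo i h, H.xyd, TensorProduct.smul_tmul',
          TensorProduct.neg_tmul]
    · intro i l h
      rcases lt_trichotomy l m with hl | rfl | hl
      · simp [yo i (h.trans hl).ne, yo l hl.ne, xo i (h.trans hl).ne, xo l hl.ne, H.xy1 i l h,
          TensorProduct.smul_tmul', TensorProduct.neg_tmul, TensorProduct.add_tmul]
      · simp [yo i h.ne, ym, xo i h.ne, xm, H.k2x, H.xF, TensorProduct.smul_tmul', add_mul, mul_add,
          TensorProduct.add_tmul, add_assoc]
      · simp [yg l hl, xg l hl]
    · intro i l h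
      rcases lt_trichotomy l m with hl | rfl | hl
      · simp [yo i (h.trans hl).ne, xo l hl.ne, H.xy2 i l h]
      · simp [yo i h.ne, xm, H.k1y]
      · simp [xg l hl]
  · intro i
    by_cases h : i = m
    · subst h; simp [xm, S.ca, TensorProduct.tmul_neg, TensorProduct.tmul_smul]
    · simp [xo i h, H.k1x, TensorProduct.smul_tmul',
          TensorProduct.neg_tmul]
  · intro i
    by_cases h : i = m
    · subst h
      simp only [ym, add_mul, mul_add, tmul_mul_tmul, S.ca, S.cb, H.k12, H.Fk1]
      simp only [← TensorProduct.smul_tmul', TensorProduct.tmul_smul, TensorProduct.tmul_zero]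
    · simp [yo i h, H.k1y]
  · intro i
    by_cases h : i = m
    · subst h; simp [xm, S.da, H.k12]
    · simp [xo i h, H.k2x]
  · intro i
    by_cases h : i = m
    · subst h
      simp only [ym, add_mul, mul_add, tmul_mul_tmul, S.da, S.db, H.k2F]
      simp only [← TensorProduct.smul_tmul', TensorProduct.tmul_smul, TensorProduct.tmul_zero]
      module
    · simp [yo i h, H.k2y, TensorProduct.smul_tmul',
          TensorProduct.neg_tmul]
  · intro i
    by_cases h : i = m
    · subst h
      simp only [xm, ym, add_mul, mul_add, tmul_mul_tmul, S.ca, S.af, H.k12, H.Fk1]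
      simp only [← TensorProduct.smul_tmul', TensorProduct.tmul_smul, TensorProduct.tmul_add]
      match_scalars <;> field_simp <;> ring
    · simp [xo i h, yo i h, H.xF, H.k2x, TensorProduct.smul_tmul', add_mul, mul_add,
          TensorProduct.add_tmul]
      abel
  · intro i
    by_cases h : i = m
    · subst h
      simp only [ym, add_mul, mul_add, tmul_mul_tmul, S.ca, S.cb, S.fb, S.af, H.k2F]
      simp only [← TensorProduct.smul_tmul', TensorProduct.tmul_smul, TensorProduct.tmul_add]
      match_scalars <;> field_simp <;> ring
    · simp [yo i h, H.Fy, H.k2y, TensorProduct.smul_tmul', TensorProduct.neg_tmul, add_mul, mul_add]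
  · simp [H.k12, S.cd]
  · simp only [add_mul, mul_add, tmul_mul_tmul, H.k12, H.Fk1, S.fc]
    simp only [← TensorProduct.smul_tmul', TensorProduct.tmul_smul, TensorProduct.tmul_add]
    module
  · simp only [add_mul, mul_add, tmul_mul_tmul, H.k2F, S.cd, S.df]
    simp only [← TensorProduct.smul_tmul', TensorProduct.tmul_smul, TensorProduct.tmul_add]
    module

/-- For every index set `S` there are families satisfying `FRel`, supported on `S`, and a functional
`g` that does not vanish on the word containing every `x i` and every `y i` with `i ∈ S`. -/
lemma exists_ferm.{u} {k : Type u} [Field k] {q : k} (hq : q ≠ 0) {n : ℕ} (S : Finset (Fin n)) :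
    ∃ (E : Type u) (_ : Ring E) (_ : Algebra k E) (x y : Fin n → E) (K₁ K₂ F : E) (g : E →ₗ[k] k),
      Ferm q x y K₁ K₂ F ∧ (∀ i, i ∉ S → x i = 0 ∧ y i = 0) ∧ (∀ w, g (w * K₁) = g w) ∧
      (∀ w, g (w * K₂) = g w) ∧
      ∃ l : List (Fin n), l.Nodup ∧ l.toFinset = S ∧ g (wd y l * wd x l) ≠ 0 := by
  induction S using Finset.induction_on_max with
  | empty =>
    refine ⟨k, inferInstance, inferInstance, 0, 0, 1, 1, 0, LinearMap.id, ?_, by simp, by simp,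
      by simp, [], by simp⟩
    refine ⟨⟨?_, ?_, ?_, ?_, ?_, ?_, ?_⟩, ?_, ?_, ?_, ?_, ?_, ?_, ?_, ?_, ?_⟩ <;> simp
  | insert m S hS ih =>
    obtain ⟨E, _, _, x, y, K₁, K₂, F, g, H, h0, hg1, hg2, l, hl, hlS, hne⟩ := ih
    obtain ⟨a, b, c, d, f, HS, hc, hd, hba⟩ := exists_site q
    have hmS : m ∉ S := fun h => lt_irrefl _ (hS m h)
    have hml : m ∉ l := fun h => hmS (by rw [← hlS]; simpa using h)
    obtain ⟨e, he⟩ : ∃ e : Matrix (Fin 4) (Fin 4) k →ₗ[k] k, ∀ t, e t = t 3 0 :=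
      ⟨{ toFun := fun t => t 3 0, map_add' := fun _ _ => rfl, map_smul' := fun _ _ => rfl },
        fun _ => rfl⟩
    refine ⟨E ⊗[k] Matrix (Fin 4) (Fin 4) k, inferInstance, inferInstance, _, _, _, _, _,
      LinearMap.mul' k k ∘ₗ TensorProduct.map g e,
      H.step hq HS m fun i hi => h0 i fun hiS => (hS i hiS).not_ge hi, ?_, ?_, ?_, l ++ [m],
      ?_, ?_, ?_⟩
    · intro i hi
      have h1 : i ≠ m := fun h => hi (by simp [h])
      have h2 : i ∉ S := fun h => hi (by simp [h])
      simp [h1, h0 i h2]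
    · intro w
      induction w using TensorProduct.induction_on with
      | zero => simp
      | tmul u v => simp [hg1, he, hc]
      | add u v hu hv => rw [add_mul, map_add, hu, hv, map_add]
    · intro w
      induction w using TensorProduct.induction_on with
      | zero => simp
      | tmul u v => simp [hg2, he, hd]
      | add u v hu hv => rw [add_mul, map_add, hu, hv, map_add]
    · rw [List.nodup_append]
      simp [hl]
      rintro a ha rfl
      exact hml ha
    · ext i; simp [← hlS, or_comm]
    · have key : ∀ (z : Fin n → E) (t) (L : List (Fin n)), m ∉ L →
          wd (Function.update (fun i => z i ⊗ₜ[k] (1 : Matrix (Fin 4) (Fin 4) k)) m t) L =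
            wd z L ⊗ₜ[k] (1 : Matrix (Fin 4) (Fin 4) k) := by
        intro z t L hL
        induction L with
        | nil => rfl
        | cons j L ih =>
          have h1 : j ≠ m := fun h => hL (by simp [h])
          rw [wd_cons, ih fun h => hL (by simp [h])]
          simp [h1]
      have hk : ∀ L : List (Fin n), K₂ * wd x L = wd x L * K₂ := by
        intro L
        induction L with
        | nil => simp
        | cons j L ih => rw [wd_cons, ← mul_assoc, H.k2x, mul_assoc, ih, mul_assoc]
      have : wd y l * K₂ * (wd x l * K₁) = wd y l * wd x l * K₂ * K₁ := by
        rw [mul_assoc, ← mul_assoc K₂, hk]; simp only [mul_assoc]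
      simp only [wd_append, key _ _ l hml, wd_cons, wd_nil, Function.update_self, mul_one]
      simp only [add_mul, mul_add, Algebra.TensorProduct.tmul_mul_tmul, one_mul, HS.aa,
        TensorProduct.tmul_zero, add_zero, this]
      simpa [he, hba, hg1, hg2] using hne

end fock

/-! ### The row side -/

section row
open Finset
variable {k R : Type*} [Field k] [Ring R] [Algebra k R] {n : ℕ} {q : k} {x y : Fin n → R}

lemma count_sort (A : Finset (Fin n)) (i : Fin n) :
    (A.sort (· ≤ ·)).count i = if i ∈ A then 1 else 0 := by
  rw [List.Nodup.count (Finset.sort_nodup A _)]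
  simp

lemma perm_of_nodup_toFinset {l l' : List (Fin n)} (hl : l.Nodup) (hl' : l'.Nodup)
    (h : ∀ a, a ∈ l ↔ a ∈ l') : l.Perm l' :=
  (List.perm_ext_iff_of_nodup hl hl').2 h

lemma wd_eq_zero_of_mem {l : List (Fin n)} {a : Fin n} (ha : a ∈ l) (h : x a = 0) : wd x l = 0 :=
  List.prod_eq_zero (List.mem_map.2 ⟨a, ha, h⟩)

/-- The other terms of the right-hand side vanish because they repeat a letter: `B` has to avoid
`I \ M` and `A` has to avoid `M \ I`. -/
lemma FRel.row_yx (H : FRel q x y) (hq : q ≠ 0) {I M : Finset (Fin n)}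
    (h0 : ∀ i, i ∉ I ∪ M → x i = 0 ∧ y i = 0) {A B : Finset (Fin n)}
    (hA : A.card = I.card) (hB : B.card = M.card) (hAB : ¬ (A = I ∧ B = M)) :
    wd y ((I \ M).sort (· ≤ ·)) * (wd y (B.sort (· ≤ ·)) * wd x (A.sort (· ≤ ·))) *
      wd x ((M \ I).sort (· ≤ ·)) = 0 := by
  by_contra hne
  have h1 : wd y ((I \ M).sort (· ≤ ·) ++ B.sort (· ≤ ·)) ≠ 0 := fun h => hne <| by
    rw [← mul_assoc, ← wd_append, h, zero_mul, zero_mul]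
  have h2 : wd x (A.sort (· ≤ ·) ++ (M \ I).sort (· ≤ ·)) ≠ 0 := fun h => hne <| by
    rw [mul_assoc, mul_assoc, ← wd_append, h, mul_zero, mul_zero]
  have n1 := not_imp_comm.1 (wd_not_nodup hq H.yy H.yy0) h1
  have n2 := not_imp_comm.1 (wd_not_nodup hq H.xx H.xx0) h2
  refine hAB ⟨eq_of_subset_of_card_le ?_ hA.ge, eq_of_subset_of_card_le ?_ hB.ge⟩
  · intro i hi
    by_contra hiI
    have hiM : i ∉ M := fun hiM => List.disjoint_of_nodup_append n2 (by simpa using hi)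
      (by simp [hiM, hiI])
    exact h2 (wd_eq_zero_of_mem (a := i) (by simp [hi]) (h0 i (by simp [hiI, hiM])).1)
  · intro i hi
    by_contra hiM
    have hiI : i ∉ I := fun hiI => List.disjoint_of_nodup_append n1 (a := i)
      (by simp [hiM, hiI]) (by simpa using hi)
    exact h1 (wd_eq_zero_of_mem (a := i) (by simp [hi]) (h0 i (by simp [hiI, hiM])).2)

/-- The other terms of the left-hand side vanish. Unless an index occurs three times, every index of
`I ∪ M` occurs exactly twice. If then some `p ∈ I` is missing from `A`, it lies in `I \ M` and in
`B`, and the second `y p` can be moved to the left past the `x` letters until it meets the first. -/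
lemma FRel.row_xy (H : FRel q x y) (hq : q ≠ 0) {I M : Finset (Fin n)}
    (hlt : ∀ i ∈ I \ M, ∀ m ∈ M \ I, i < m)
    (h0 : ∀ i, i ∉ I ∪ M → x i = 0 ∧ y i = 0) {A B : Finset (Fin n)}
    (hA : A.card = I.card) (hB : B.card = M.card) (hAB : ¬ (A = I ∧ B = M)) :
    wd y ((I \ M).sort (· ≤ ·)) * (wd x (A.sort (· ≤ ·)) * wd y (B.sort (· ≤ ·))) *
      wd x ((M \ I).sort (· ≤ ·)) = 0 := by
  by_contra hne
  have hAS : A ⊆ I ∪ M := fun i hi => by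
    by_contra hiS
    exact hne (by rw [wd_eq_zero_of_mem (x := x) (l := A.sort (· ≤ ·)) (a := i) (by simpa using hi)
      (h0 i hiS).1]; simp)
  have hBS : B ⊆ I ∪ M := fun i hi => by
    by_contra hiS
    exact hne (by rw [wd_eq_zero_of_mem (x := y) (l := B.sort (· ≤ ·)) (a := i) (by simpa using hi)
      (h0 i hiS).2]; simp)
  have hle : ∀ i ∈ I ∪ M, ((if i ∈ I \ M then 1 else 0) + (if i ∈ A then 1 else 0) +
      (if i ∈ B then 1 else 0) + (if i ∈ M \ I then 1 else 0)) ≤ 2 := by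
    intro i _
    by_contra hc
    refine hne ?_
    rw [← mul_assoc]
    refine H.word_eq_zero hq _ _ _ _ i ?_
    simp only [count_sort]
    omega
  -- Both sides are `2 * |I ∪ M|`, so each inequality in `hle` is an equality.
  have hsum : ∑ i ∈ I ∪ M, ((if i ∈ I \ M then 1 else 0) + (if i ∈ A then 1 else 0) +
      (if i ∈ B then 1 else 0) + (if i ∈ M \ I then 1 else 0)) = ∑ i ∈ I ∪ M, 2 := by
    have e : ∀ T ⊆ I ∪ M, (∑ i ∈ I ∪ M, if i ∈ T then 1 else 0) = T.card := fun T hT => by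
      rw [← Finset.sum_filter, Finset.filter_mem_eq_inter, Finset.inter_eq_right.2 hT]; simp
    simp only [Finset.sum_add_distrib]
    rw [e _ hAS, e _ hBS, e _ (sdiff_subset.trans subset_union_left),
      e _ (sdiff_subset.trans subset_union_right), hA, hB]
    have c1 := Finset.card_sdiff_add_card I M
    have c2 := Finset.card_sdiff_add_card M I
    rw [union_comm] at c2
    simp
    omega
  have heq := (Finset.sum_eq_sum_iff_of_le hle).1 hsum
  have hAI : A = I := by
    by_contra hAI
    obtain ⟨p, hpI, hpA⟩ : ∃ p ∈ I, p ∉ A := by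
      by_contra! hc
      exact hAI (eq_of_subset_of_card_le hc hA.le).symm
    have hp := heq p (by simp [hpI])
    have hpM : p ∉ M := fun hpM => by
      simp [hpI, hpA, hpM] at hp
      split_ifs at hp <;> omega
    have hpB : p ∈ B := by
      by_contra hpB
      simp [hpI, hpA, hpM, hpB] at hp
    have hCA : I ∩ M ⊆ A ∩ B := fun i hi => by
      obtain ⟨h1, h2⟩ := mem_inter.1 hi
      have := heq i (by simp [h1])
      by_contra hc
      rw [mem_inter] at hc
      simp [h1, h2] at this
      split_ifs at this <;> simp_all
    have hperm : (B.sort (· ≤ ·)).Perm ((I ∩ M).sort (· ≤ ·) ++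
        (p :: ((B \ (I ∩ M)).erase p).sort (· ≤ ·))) := by
      refine perm_of_nodup_toFinset (sort_nodup _ _) ?_ ?_
      · rw [List.nodup_append]
        refine ⟨sort_nodup _ _, ?_, ?_⟩
        · simp
        · intro a ha b hb
          rintro rfl
          simp at ha hb
          rcases hb with rfl | hb
          · exact hpM ha.2
          · exact hb.2.2 ha.1 ha.2
      · intro a
        simp
        constructor
        · intro ha; tauto
        · rintro (h | rfl | h)
          · exact (mem_inter.1 (hCA (mem_inter.2 h))).2
          · exact hpB
          · exact h.2.1
    obtain ⟨u, -, hu⟩ := wd_perm hq H.yy hperm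
    have e1 := H.wd_y_word hq (A.sort (· ≤ ·)) ((I ∩ M).sort (· ≤ ·)) (sort_nodup _ _)
      fun a ha => by
        simp only [mem_sort] at ha ⊢
        exact (mem_inter.1 (hCA ha)).1
    have e2 := H.wd_y_notMem p (A.sort (· ≤ ·)) (by simpa using hpA)
      (wd y ((I \ M).sort (· ≤ ·) ++ (I ∩ M).sort (· ≤ ·))) fun j hj hjp => by
        refine wd_mul_mem hq H.yy H.yy0 ?_
        have hjA : j ∈ A := by simpa using hj
        have hjI : j ∈ I := by
          by_contra hjI
          have hjM : j ∈ M := by simpa [hjI] using hAS hjA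
          exact lt_asymm hjp (hlt p (by simp [hpI, hpM]) j (by simp [hjI, hjM]))
        simp [hjI, em']
    have e3 : wd y ((I \ M).sort (· ≤ ·) ++ (I ∩ M).sort (· ≤ ·)) * y p = 0 :=
      wd_mul_mem hq H.yy H.yy0 (by simp [hpI, hpM])
    rw [e3, zero_mul, wd_append] at e2
    refine hne ?_
    rw [hu, wd_append, wd_cons, mul_smul_comm, ← mul_assoc (wd x _) (wd y _), e1]
    simp only [mul_smul_comm, smul_mul_assoc]
    simp only [← mul_assoc] at e2 ⊢
    rw [e2]; simp
  refine hAB ⟨hAI, (eq_of_subset_of_card_le (fun i hi => ?_) hB.le).symm⟩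
  subst hAI
  have := heq i (by simp [hi])
  by_contra hc
  simp [hc, hi] at this
  split_ifs at this <;> omega

/-- The surviving terms on both sides: the `y` letters with index in `I ∩ M` contribute a factor `q`
each, and those with index in `M \ I` move freely, since every `y j` with `j ∈ I` is killed by
`y_{I \ M} * y_{I ∩ M}`. -/
lemma FRel.row_main (H : FRel q x y) (hq : q ≠ 0) (I M : Finset (Fin n)) :
    wd y ((I \ M).sort (· ≤ ·)) * (wd x (I.sort (· ≤ ·)) * wd y (M.sort (· ≤ ·))) *
      wd x ((M \ I).sort (· ≤ ·)) =
    q ^ (I ∩ M).card • (wd y ((I \ M).sort (· ≤ ·)) *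
      (wd y (M.sort (· ≤ ·)) * wd x (I.sort (· ≤ ·))) * wd x ((M \ I).sort (· ≤ ·))) := by
  have hperm : (M.sort (· ≤ ·)).Perm ((I ∩ M).sort (· ≤ ·) ++ (M \ I).sort (· ≤ ·)) := by
    refine perm_of_nodup_toFinset (sort_nodup _ _) ?_ ?_
    · rw [List.nodup_append]
      refine ⟨sort_nodup _ _, sort_nodup _ _, ?_⟩
      intro a ha b hb
      rintro rfl
      simp at ha hb
      exact hb.2 ha.1
    · intro a
      simp
      tauto
  obtain ⟨u, -, hu⟩ := wd_perm hq H.yy hperm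
  have e1 := H.wd_y_word hq (I.sort (· ≤ ·)) ((I ∩ M).sort (· ≤ ·)) (sort_nodup _ _)
    fun a ha => by
      simp only [mem_sort] at ha ⊢
      exact (mem_inter.1 ha).1
  rw [length_sort] at e1
  have e2 := H.wd_y_word' (I.sort (· ≤ ·)) ((M \ I).sort (· ≤ ·))
    (wd y ((I \ M).sort (· ≤ ·) ++ (I ∩ M).sort (· ≤ ·))) (fun a ha => by simp at ha ⊢; exact ha.2)
    fun a _ j hj _ d' => by
      rw [← wd_append]
      refine wd_mul_mem hq H.yy H.yy0 ?_
      have hjI : j ∈ I := by simpa using hj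
      by_cases hjM : j ∈ M <;> simp [hjI, hjM]
  rw [wd_append] at e2
  rw [hu, wd_append, mul_smul_comm, ← mul_assoc (wd x _) (wd y _), e1]
  simp only [mul_smul_comm, smul_mul_assoc]
  rw [smul_comm]
  simp only [← mul_assoc] at e2 ⊢
  rw [e2]

/-- The surviving word contains every `y i` and every `x i` with `i ∈ I ∪ M` exactly once. -/
lemma FRel.row_ne (H : FRel q x y) (hq : q ≠ 0) {I M : Finset (Fin n)} {l : List (Fin n)}
    (hl : l.Nodup) (hlS : l.toFinset = I ∪ M) : ∃ u : k, u ≠ 0 ∧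
    wd y ((I \ M).sort (· ≤ ·)) * (wd y (M.sort (· ≤ ·)) * wd x (I.sort (· ≤ ·))) *
      wd x ((M \ I).sort (· ≤ ·)) = u • (wd y l * wd x l) := by
  have hmem : ∀ a, a ∈ l ↔ a ∈ I ∨ a ∈ M := fun a => by
    rw [← List.mem_toFinset, hlS, mem_union]
  have p1 : ((I \ M).sort (· ≤ ·) ++ M.sort (· ≤ ·)).Perm l := by
    refine perm_of_nodup_toFinset ?_ hl ?_
    · rw [List.nodup_append]
      refine ⟨sort_nodup _ _, sort_nodup _ _, ?_⟩
      rintro a ha b hb rfl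
      simp at ha hb
      exact ha.2 hb
    · intro a
      simp [hmem]
      tauto
  have p2 : (I.sort (· ≤ ·) ++ (M \ I).sort (· ≤ ·)).Perm l := by
    refine perm_of_nodup_toFinset ?_ hl ?_
    · rw [List.nodup_append]
      refine ⟨sort_nodup _ _, sort_nodup _ _, ?_⟩
      rintro a ha b hb rfl
      simp at ha hb
      exact hb.2 ha
    · intro a
      simp [hmem]
      tauto
  obtain ⟨u, hu0, hu⟩ := wd_perm hq H.yy p1
  obtain ⟨v, hv0, hv⟩ := wd_perm hq H.xx p2
  refine ⟨u * v, mul_ne_zero hu0 hv0, ?_⟩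
  rw [wd_append] at hu hv
  rw [← mul_assoc, hu, mul_assoc, hv, smul_mul_smul_comm]

end row

/-! ### The quasicommutation relation -/

open Finset

lemma wd_tmul {k A E : Type*} [Field k] [Ring A] [Algebra k A] [Ring E] [Algebra k E] {n : ℕ}
    (x : Fin n → E) (l : List (Fin n)) :
    wd (fun i => (1 : A) ⊗ₜ[k] x i) l = 1 ⊗ₜ wd x l := by
  induction l with
  | nil => rfl
  | cons a l ih => simp [ih]

lemma FRel.tmul {k A E : Type*} [Field k] [Ring A] [Algebra k A] [Ring E] [Algebra k E] {n : ℕ}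
    {q : k} {x y : Fin n → E} (H : FRel q x y) :
    FRel q (fun i => (1 : A) ⊗ₜ[k] x i) (fun i => (1 : A) ⊗ₜ[k] y i) where
  xx0 i := by simp [H.xx0]
  yy0 i := by simp [H.yy0]
  xx i l h := by
    rw [Algebra.TensorProduct.tmul_mul_tmul, H.xx i l h, TensorProduct.tmul_smul]; simp
  yy i l h := by
    rw [Algebra.TensorProduct.tmul_mul_tmul, H.yy i l h, TensorProduct.tmul_smul]; simp
  xyd i := by
    rw [Algebra.TensorProduct.tmul_mul_tmul, H.xyd i, TensorProduct.tmul_smul]; simp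
  xy1 i l h := by
    rw [Algebra.TensorProduct.tmul_mul_tmul, H.xy1 i l h, TensorProduct.tmul_add,
      TensorProduct.tmul_smul]; simp
  xy2 i l h := by simp [H.xy2 i l h]

/-- The relation `ξ_J η_N = q ^ |J ∩ N| η_N ξ_J` between products of generic vectors, expanded in
terms of quantum minors. -/
lemma column_identity {k E : Type*} [Field k] [Ring E] [Algebra k E] {n : ℕ} {q : k} (hq : q ≠ 0)
    {x y : Fin n → E} (H : FRel q x y) (J N : Finset (Fin n))
    (hlt : ∀ m ∈ N \ J, ∀ j ∈ J \ N, m < j) :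
    ∑ A ∈ powersetCard J.card univ, ∑ B ∈ powersetCard N.card univ,
      (qMinor k n q A J * qMinor k n q B N) ⊗ₜ[k]
        (wd x (A.sort (· ≤ ·)) * wd y (B.sort (· ≤ ·))) =
    q ^ (J ∩ N).card • ∑ A ∈ powersetCard J.card univ, ∑ B ∈ powersetCard N.card univ,
      (qMinor k n q B N * qMinor k n q A J) ⊗ₜ[k]
        (wd y (B.sort (· ≤ ·)) * wd x (A.sort (· ≤ ·))) := by
  let φ : QMat.A k n q →ₐ[k] QMat.A k n q ⊗[k] E := Algebra.TensorProduct.includeLeft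
  have HT : FRel q (fun i => (1 : QMat.A k n q) ⊗ₜ[k] x i) (fun i => 1 ⊗ₜ[k] y i) := H.tmul
  have hx : ∀ i j l, (1 : QMat.A k n q) ⊗ₜ[k] x l * φ (X k n q i j) =
      φ (X k n q i j) * 1 ⊗ₜ[k] x l := fun i j l => by simp [φ]
  have hy : ∀ i j l, (1 : QMat.A k n q) ⊗ₜ[k] y l * φ (X k n q i j) =
      φ (X k n q i j) * 1 ⊗ₜ[k] y l := fun i j l => by simp [φ]
  have hperm : (N.sort (· ≤ ·)).Perm ((J ∩ N).sort (· ≤ ·) ++ (N \ J).sort (· ≤ ·)) := by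
    refine perm_of_nodup_toFinset (sort_nodup _ _) ?_ ?_
    · rw [List.nodup_append]
      refine ⟨sort_nodup _ _, sort_nodup _ _, ?_⟩
      rintro a ha b hb rfl
      simp at ha hb
      exact hb.2 ha.1
    · intro a
      simp
      tauto
  have key := (HT.coact hq φ hx hy).extremal hq (J.sort (· ≤ ·)) (N.sort (· ≤ ·))
    ((J ∩ N).sort (· ≤ ·)) ((N \ J).sort (· ≤ ·)) (sort_nodup _ _) hperm
    (fun a ha => by simp at ha ⊢; exact ha.1) (fun a ha => by simp at ha ⊢; exact ha.2)
    (fun a ha j hj hjc => by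
      simp at ha hj hjc
      exact hlt a (by simpa using ha) j (by simpa [hj] using hjc hj))
  have ex := wd_coact hq HT.xx HT.xx0 φ hx J
  have ey := wd_coact hq HT.yy HT.yy0 φ hy N
  simp only [wd_tmul] at ex ey
  rw [ex, ey, length_sort, sum_mul_sum, sum_mul_sum, sum_comm (s := powersetCard N.card univ)] at key
  simpa [φ] using key

/-- Part (b) with the powers of `q` on both sides, obtained by applying `w ↦ g (y_P w x_Q)` with
`P = I \ M`, `Q = M \ I` to the second tensor factor of `column_identity`. -/
theorem minor_comm {k : Type*} [Field k] {n : ℕ} {q : k} (hq : q ≠ 0)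
    (I J M N : Finset (Fin n)) (hIJ : I.card = J.card) (hMN : M.card = N.card)
    (hr : ∀ i ∈ I \ M, ∀ m ∈ M \ I, i < m) (hc : ∀ x ∈ N \ J, ∀ j ∈ J \ N, x < j) :
    q ^ (I ∩ M).card • (qMinor k n q I J * qMinor k n q M N) =
      q ^ (J ∩ N).card • (qMinor k n q M N * qMinor k n q I J) := by
  obtain ⟨E, _, _, x, y, _, _, _, g, HF, h0, -, -, l, hl, hlS, hne⟩ := exists_ferm hq (I ∪ M)
  have H : FRel q x y := HF.toFRel
  have key := column_identity hq H J N hc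
  let G : E →ₗ[k] k := g ∘ₗ LinearMap.mulRight k (wd x ((M \ I).sort (· ≤ ·))) ∘ₗ
    LinearMap.mulLeft k (wd y ((I \ M).sort (· ≤ ·)))
  have hG : ∀ w, G w = g (wd y ((I \ M).sort (· ≤ ·)) * w * wd x ((M \ I).sort (· ≤ ·))) :=
    fun w => rfl
  let Φ : QMat.A k n q ⊗[k] E →ₗ[k] QMat.A k n q :=
    (TensorProduct.rid k _).toLinearMap ∘ₗ TensorProduct.map LinearMap.id G
  have hΦ : ∀ a w, Φ (a ⊗ₜ w) = G w • a := fun a w => by simp [Φ]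
  have hI : I ∈ powersetCard J.card (univ : Finset (Fin n)) := by simp [mem_powersetCard, hIJ]
  have hM : M ∈ powersetCard N.card (univ : Finset (Fin n)) := by simp [mem_powersetCard, hMN]
  have single : ∀ f : Finset (Fin n) → Finset (Fin n) → QMat.A k n q,
      (∀ A B, A.card = I.card → B.card = M.card → ¬ (A = I ∧ B = M) → f A B = 0) →
      ∑ A ∈ powersetCard J.card univ, ∑ B ∈ powersetCard N.card univ, f A B = f I M := by
    intro f hf
    rw [sum_eq_single_of_mem I hI, sum_eq_single_of_mem M hM]
    · intro B hB hBM
      exact hf I B rfl (by rw [hMN]; exact (mem_powersetCard.1 hB).2) fun h => hBM h.2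
    · intro A hA hAI
      refine sum_eq_zero fun B hB => ?_
      exact hf A B (by rw [hIJ]; exact (mem_powersetCard.1 hA).2)
        (by rw [hMN]; exact (mem_powersetCard.1 hB).2) fun h => hAI h.1
  have key2 := congrArg Φ key
  simp only [map_sum, map_smul, hΦ] at key2
  rw [single _ fun A B hA hB hAB => by rw [hG, H.row_xy hq hr h0 hA hB hAB]; simp,
    single _ fun A B hA hB hAB => by rw [hG, H.row_yx hq h0 hA hB hAB]; simp,
    hG, hG, H.row_main hq I M] at key2
  obtain ⟨u, hu, hut⟩ := H.row_ne hq hl hlS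
  rw [hut, map_smul, map_smul] at key2
  have ht : u • g (wd y l * wd x l) ≠ 0 := by
    rw [smul_eq_mul]; exact mul_ne_zero hu hne
  generalize u • g (wd y l * wd x l) = t at key2 ht
  rw [smul_eq_mul, mul_comm, mul_smul, smul_comm _ t] at key2
  have key3 := congrArg (t⁻¹ • ·) key2
  simpa only [inv_smul_smul₀ ht] using key3

theorem minor_comm_zpow {k : Type*} [Field k] {n : ℕ} {q : k} (hq : q ≠ 0)
    (I J M N : Finset (Fin n)) (hIJ : I.card = J.card) (hMN : M.card = N.card)
    (hr : ∀ i ∈ I \ M, ∀ m ∈ M \ I, i < m) (hc : ∀ x ∈ N \ J, ∀ j ∈ J \ N, x < j) :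
    qMinor k n q I J * qMinor k n q M N =
      (q ^ (((J ∩ N).card : ℤ) - ((I ∩ M).card : ℤ))) •
        (qMinor k n q M N * qMinor k n q I J) := by
  have h := minor_comm hq I J M N hIJ hMN hr hc
  rw [zpow_sub₀ hq, zpow_natCast, zpow_natCast, div_eq_inv_mul, mul_smul, ← h,
    inv_smul_smul₀ (pow_ne_zero _ hq)]

end QMatProof

/-- Corollary 5.5: quasicommutation relations. -/
theorem stmt16 (k : Type*) [Field k] (n : ℕ) (hn : 0 < n) (q : k) (hq : q ≠ 0)
    (I J M N : Finset (Fin n)) (hIJ : I.card = J.card) (hMN : M.card = N.card) :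
    ((∀ m ∈ M \ I, ∀ i ∈ I \ M, m < i) → (∀ j ∈ J \ N, ∀ x ∈ N \ J, j < x) →
      qMinor k n q I J * qMinor k n q M N =
        (q ^ (((I ∩ M).card : ℤ) - ((J ∩ N).card : ℤ))) •
          (qMinor k n q M N * qMinor k n q I J)) ∧
    ((∀ i ∈ I \ M, ∀ m ∈ M \ I, i < m) → (∀ x ∈ N \ J, ∀ j ∈ J \ N, x < j) →
      qMinor k n q I J * qMinor k n q M N =
        (q ^ (((J ∩ N).card : ℤ) - ((I ∩ M).card : ℤ))) •
          (qMinor k n q M N * qMinor k n q I J)) := by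
  refine ⟨fun hr hc => ?_, QMatProof.minor_comm_zpow hq I J M N hIJ hMN⟩
  rw [QMatProof.minor_comm_zpow hq M N I J hMN hIJ hr hc, smul_smul, ← zpow_add₀ hq, Finset.inter_comm N J,
    Finset.inter_comm M I, sub_add_sub_cancel, sub_self, zpow_zero, one_smul]

end
end

section
/- Let I,J,M,N ⊆ {1,…,n} with |I| = |J| and |M| = |N|. Then in A: q^{|J∩N|} [I|J][M|N] + q^{|J∩N|} Σ_{S ∈ S_>(I,M)} μ̃_S [S|J][S^♮|N] = q^{|I∩M|} [M|N][I|J] + q^{|I∩M|} Σ_{T ∈ S_<(J,N)} λ̃_T [M|T^♮][I|T], where μ̃_S = (−q̂)^{|S∖I|} (−q)^{−L^♮(S,I,M)} ξ_q(S∖I; I∖S) for S ∈ S_>(I,M) (with S^♮ taken relative to (I,M)) and λ̃_T = (−q̂)^{|J∖T|} (−q)^{−L(T,J,N)} ξ_q(J∖T; T∖J) for T ∈ S_<(J,N) (with T^♮ taken relative to (J,N)). -/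
/-!
The commutation relation between quantum minors is obtained by computing one coefficient in two
ways.

Consider an algebra generated by two rows of letters `e_1, …, e_n` and `e'_1, …, e'_n` subject to
the relations `QExt` of a `q`-exterior algebra: the letters of each row square to zero and
anticommute up to `q`, and the letters of different rows can be interchanged at the cost of
correction terms. For `J ⊆ {1, …, n}` let `e_J` be the ordered monomial. Induction on `J` gives the
straightening law (`QExt.straighten`)
`q^{|J ∩ N|} e_J e'_N = ∑_T λ̃_T e'_{T♮} e_T`,
where `T` runs over all sets with `J ∩ N ⊆ T ⊆ J ∪ N` and `|T| = |J|`; the `-q`-integers in `ξ_q`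
appear when one sums over the letter with which the smallest letter of `J` exchanges its row.
The terms with `T ≰ J` vanish, because then a factor `[0]` occurs in `ξ_q` (`lam_eq_zero`).

The elements `g_j = ∑_i X_{ij} ⊗ e_i` and `g'_j = ∑_i X_{ij} ⊗ e'_i` of the tensor product with
`O_q(M_n(k))` satisfy the same relations (`QExt.coact`), and `g_J = ∑_I [I|J] ⊗ e_I`
(`eprod_coact`). Hence `q^{|J ∩ N|} g_J g'_N` can be straightened before or after expanding it
in quantum minors. Comparing the coefficients of `e'_M e_I` yields the relation (`commutation`):
straightening first gives the sum of the `λ̃_T [M|T♮][I|T]`, and expanding first gives the sum of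
the products `[S|J][S♮|N]`, weighted by the coefficient `λ̃_I` of the pair `(S, S♮)`, which
equals `μ̃_S` (`lam_snat`).

Comparing coefficients requires the monomials `e'_M e_I` to be linearly independent. This is
arranged by an explicit model (`exists_model`), built one column at a time from `4 × 4` matrices,
together with functionals dual to the monomials.
-/


open scoped TensorProduct
open scoped Classical

noncomputable section

open QMat

namespace QMat

/-! ### The exterior algebra relations and ordered monomials -/

/-- The ordered monomial `e_{j₁} e_{j₂} ⋯ e_{j_t}` attached to `J = {j₁ < ⋯ < j_t}`. -/
def eprod {n : ℕ} {B : Type*} [Monoid B] (e : Fin n → B) (J : Finset (Fin n)) : B :=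
  (J.sort.map e).prod

/-- The relations of the `q`-exterior algebra: `e_i² = 0` and `e_j e_i = -q e_i e_j` for `i < j`. -/
structure QAnti {k : Type*} [Field k] {n : ℕ} (q : k) {B : Type*} [Ring B] [Algebra k B]
    (e : Fin n → B) : Prop where
  sq : ∀ i, e i * e i = 0
  anti : ∀ i j, i < j → e j * e i = (-q) • (e i * e j)

/-- The relations of the `q`-exterior algebra of `2 × n` matrices with rows `e` and `e'`. -/
structure QExt {k : Type*} [Field k] {n : ℕ} (q : k) {B : Type*} [Ring B] [Algebra k B]
    (e e' : Fin n → B) : Prop where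
  left : QAnti q e
  right : QAnti q e'
  diag : ∀ i, e i * e' i = q⁻¹ • (e' i * e i)
  lt : ∀ i j, i < j → e i * e' j = e' j * e i
  gt : ∀ i j, i < j → e j * e' i = e' i * e j - (q - q⁻¹) • (e' j * e i)

section Monomials

variable {k : Type*} [Field k] {n : ℕ} {q : k} {B : Type*} [Ring B] [Algebra k B]
  {e e' : Fin n → B}

@[simp] lemma eprod_empty : eprod e ∅ = 1 := by simp [eprod]

lemma eprod_insert_min {b : Fin n} {J : Finset (Fin n)} (h : ∀ x ∈ J, b < x) :
    eprod e (insert b J) = e b * eprod e J := by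
  have hb : b ∉ J := fun hb => lt_irrefl _ (h b hb)
  unfold eprod
  rw [Finset.sort_insert (· ≤ ·) (fun x hx => (h x hx).le) hb]
  simp

lemma QAnti.mul_eprod_of_mem (he : QAnti q e) {i : Fin n} {T : Finset (Fin n)} (hi : i ∈ T) :
    e i * eprod e T = 0 := by
  induction T using Finset.induction_on_min with
  | empty => simp at hi
  | insert a T ha ih =>
    rw [eprod_insert_min ha, ← mul_assoc]
    rcases Finset.mem_insert.1 hi with rfl | hi
    · rw [he.sq, zero_mul]
    · rw [he.anti a i (ha i hi), smul_mul_assoc, mul_assoc, ih hi, mul_zero, smul_zero]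

/-- Left multiplication by a letter not in `T` inserts it, with one factor `-q` for each smaller
letter of `T`. -/
lemma QAnti.mul_eprod (he : QAnti q e) {i : Fin n} {T : Finset (Fin n)} (hi : i ∉ T) :
    e i * eprod e T = (-q) ^ (T.filter (· < i)).card • eprod e (insert i T) := by
  induction T using Finset.induction_on_min with
  | empty => simp [eprod]
  | insert a T ha ih =>
    rw [Finset.mem_insert, not_or] at hi
    rcases lt_or_gt_of_ne hi.1 with h | h
    · have h1 : ∀ x ∈ insert a T, i < x := by
        intro x hx
        rcases Finset.mem_insert.1 hx with rfl | hx
        · exact h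
        · exact h.trans (ha x hx)
      have h2 : (insert a T).filter (· < i) = ∅ :=
        Finset.filter_eq_empty_iff.2 fun x hx => (h1 x hx).le.not_gt
      rw [eprod_insert_min h1, h2]
      simp
    · have h1 : ∀ x ∈ insert i T, a < x := by
        intro x hx
        rcases Finset.mem_insert.1 hx with rfl | hx
        · exact h
        · exact ha x hx
      rw [Finset.insert_comm, eprod_insert_min h1, eprod_insert_min ha, ← mul_assoc,
        he.anti a i h, smul_mul_assoc, mul_assoc, ih hi.2, Finset.filter_insert, if_pos h,
        Finset.card_insert_of_notMem (by
          intro hh; exact lt_irrefl _ (ha a (Finset.mem_filter.1 hh).1)),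
        mul_smul_comm, smul_smul, pow_succ']

/-- Moving a single letter `e_j` to the right of an ordered monomial in the `e'`: apart from the
term where it passes unchanged, it can exchange its row with a smaller letter `e'_i`. -/
lemma QExt.mul_eprod (h : QExt q e e') {j : Fin n} {N : Finset (Fin n)} (hj : j ∉ N) :
    e j * eprod e' N = eprod e' N * e j - (q - q⁻¹) •
      ∑ i ∈ N.filter (· < j), (-q) ^ (N.filter fun x => i < x ∧ x < j).card •
        (eprod e' (insert j (N.erase i)) * e i) := by
  induction N using Finset.induction_on_min generalizing j with
  | empty => simp
  | insert a N ha ih =>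
    rw [Finset.mem_insert, not_or] at hj
    have haN : a ∉ N := fun hh => lt_irrefl _ (ha a hh)
    rcases lt_or_gt_of_ne hj.1 with hlt | hgt
    · have h1 : ∀ x ∈ insert a N, j < x := by
        intro x hx
        rcases Finset.mem_insert.1 hx with rfl | hx
        · exact hlt
        · exact hlt.trans (ha x hx)
      have h2 : (insert a N).filter (· < j) = ∅ :=
        Finset.filter_eq_empty_iff.2 fun x hx => (h1 x hx).le.not_gt
      have h3 : N.filter (· < j) = ∅ :=
        Finset.filter_eq_empty_iff.2 fun x hx => (h1 x (Finset.mem_insert_of_mem hx)).le.not_gt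
      have ih' := ih hj.2
      rw [h3] at ih'
      rw [h2, eprod_insert_min ha, ← mul_assoc, h.lt j a hlt, mul_assoc, ih']
      simp [mul_assoc]
    · have h3 : N.filter (· < a) = ∅ :=
        Finset.filter_eq_empty_iff.2 fun x hx => (ha x hx).le.not_gt
      have iha := ih haN
      rw [h3, Finset.sum_empty, smul_zero, sub_zero] at iha
      rw [eprod_insert_min ha, ← mul_assoc, h.gt a j hgt, sub_mul, mul_assoc, ih hj.2,
        smul_mul_assoc, mul_assoc (e' j), iha, ← mul_assoc (e' j), h.right.mul_eprod hj.2,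
        Finset.filter_insert, if_pos hgt,
        Finset.sum_insert (by simp [haN])]
      have e1 : (insert a N).filter (fun x => a < x ∧ x < j) = N.filter (· < j) := by
        ext x
        simp only [Finset.mem_filter, Finset.mem_insert]
        constructor
        · rintro ⟨rfl | hx, h1, h2⟩
          · exact absurd h1 (lt_irrefl _)
          · exact ⟨hx, h2⟩
        · rintro ⟨hx, h2⟩
          exact ⟨Or.inr hx, ha x hx, h2⟩
      have e2 : ∀ i ∈ N.filter (· < j),
          (-q) ^ ((insert a N).filter fun x => i < x ∧ x < j).card •
            (eprod e' (insert j ((insert a N).erase i)) * e i) =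
          e' a * ((-q) ^ (N.filter fun x => i < x ∧ x < j).card •
            (eprod e' (insert j (N.erase i)) * e i)) := by
        intro i hi
        have hi' := Finset.mem_filter.1 hi
        have hai : a < i := ha i hi'.1
        rw [Finset.filter_insert, if_neg (fun hh => hai.not_gt hh.1),
          Finset.erase_insert_of_ne hai.ne, Finset.insert_comm, eprod_insert_min (by
            intro x hx
            rcases Finset.mem_insert.1 hx with rfl | hx
            · exact hgt
            · exact ha x (Finset.mem_of_mem_erase hx)), mul_smul_comm, mul_assoc]
      rw [Finset.sum_congr rfl e2, ← Finset.mul_sum, e1, Finset.erase_insert haN]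
      simp only [mul_sub, smul_add, smul_mul_assoc, mul_smul_comm, mul_assoc]
      abel

/-- Next to a factor `e_d` the letter `e'_d` commutes with all `e_b`: the correction term of
`e_b e'_d` contains `e_d`, and is killed by the factor `e_d` on the left. -/
lemma QExt.mul_list_mul_left (h : QExt q e e') (hq : q ≠ 0) (d : Fin n) (l : List (Fin n)) :
    e d * (l.map e).prod * e' d = e d * e' d * (l.map e).prod := by
  induction l with
  | nil => simp
  | cons b l ih =>
    simp only [List.map_cons, List.prod_cons]
    by_cases hb : b = d
    · subst hb
      rw [← mul_assoc, h.left.sq, h.diag]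
      simp only [smul_mul_assoc]
      rw [mul_assoc (e' b), ← mul_assoc (e b), h.left.sq]
      simp
    · obtain ⟨s, hs⟩ : ∃ s : k, e d * e b = s • (e b * e d) := by
        rcases lt_or_gt_of_ne hb with hlt | hlt
        · exact ⟨_, h.left.anti _ _ hlt⟩
        · refine ⟨(-q)⁻¹, ?_⟩
          rw [h.left.anti _ _ hlt, smul_smul, inv_mul_cancel₀ (neg_ne_zero.2 hq), one_smul]
      have h1 : e d * e b * e' d = e d * e' d * e b := by
        rcases lt_or_gt_of_ne hb with hlt | hlt
        · rw [mul_assoc, h.lt _ _ hlt, mul_assoc]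
        · rw [mul_assoc, h.gt _ _ hlt, mul_sub, mul_smul_comm, ← mul_assoc (e d) (e' b),
            h.lt _ _ hlt, mul_assoc (e' b), h.left.sq]
          simp [mul_assoc]
      calc e d * (e b * (l.map e).prod) * e' d
          = s • (e b * (e d * (l.map e).prod * e' d)) := by
            rw [← mul_assoc (e d), hs]; simp [mul_assoc]
        _ = e d * e b * e' d * (l.map e).prod := by
            rw [ih, hs]; simp [mul_assoc]
        _ = _ := by rw [h1]; simp [mul_assoc]

/-- The counterpart of `QExt.mul_list_mul_left`: to the right of `e'_d` the letter `e_d` commutes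
with all `e'_b`. -/
lemma QExt.mul_list_mul_right (h : QExt q e e') (hq : q ≠ 0) (d : Fin n) (l : List (Fin n)) :
    e' d * e d * (l.map e').prod = e' d * (l.map e').prod * e d := by
  induction l with
  | nil => simp
  | cons b l ih =>
    simp only [List.map_cons, List.prod_cons]
    by_cases hb : b = d
    · subst hb
      rw [← mul_assoc (e' b * e b), mul_assoc (e' b), h.diag, ← mul_assoc (e' b) (e' b),
        h.right.sq, mul_smul_comm, ← mul_assoc (e' b), h.right.sq]
      simp
    · obtain ⟨s, hs⟩ : ∃ s : k, e' d * e' b = s • (e' b * e' d) := by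
        rcases lt_or_gt_of_ne hb with hlt | hlt
        · exact ⟨_, h.right.anti _ _ hlt⟩
        · refine ⟨(-q)⁻¹, ?_⟩
          rw [h.right.anti _ _ hlt, smul_smul, inv_mul_cancel₀ (neg_ne_zero.2 hq), one_smul]
      have h1 : e' d * e d * e' b = e' d * e' b * e d := by
        rcases lt_or_gt_of_ne hb with hlt | hlt
        · rw [mul_assoc, h.gt _ _ hlt, mul_sub, mul_smul_comm, ← mul_assoc (e' d) (e' d),
            h.right.sq]
          simp [mul_assoc]
        · rw [mul_assoc, h.lt _ _ hlt, mul_assoc]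
      calc e' d * e d * (e' b * (l.map e').prod)
          = e' d * e' b * (e d * (l.map e').prod) := by
            rw [← mul_assoc, h1]; simp [mul_assoc]
        _ = s • (e' b * (e' d * e d * (l.map e').prod)) := by
            rw [hs]; simp [mul_assoc]
        _ = e' d * e' b * (l.map e').prod * e d := by
            rw [ih, hs]; simp [mul_assoc]
        _ = _ := by simp [mul_assoc]

end Monomials

/-! ### The coefficients of the straightening law -/

section Coefficients

variable {k : Type*} [Field k] {n : ℕ} {q : k}

lemma ell_eq_sum (S T : Finset (Fin n)) :
    ell n S T = ∑ t ∈ T, (S.filter (t < ·)).card := by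
  unfold ell
  rw [Finset.card_filter, Finset.sum_product_right]
  refine Finset.sum_congr rfl fun t _ => ?_
  rw [Finset.card_filter]

lemma card_filter_lt_orderIso {P : Finset (Fin n)} {m : ℕ} (h : P.card = m) (l : Fin m) :
    (P.filter (· < (P.orderIsoOfFin h l : Fin n))).card = l := by
  have : P.filter (· < (P.orderIsoOfFin h l : Fin n)) =
      (Finset.univ.filter (· < l)).map (P.orderEmbOfFin h).toEmbedding := by
    ext x
    simp only [Finset.mem_filter, Finset.mem_map, Finset.mem_univ, true_and]
    constructor
    · rintro ⟨hx, hlt⟩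
      obtain ⟨m, hm⟩ := (P.orderIsoOfFin h).surjective ⟨x, hx⟩
      refine ⟨m, ?_, ?_⟩
      · rw [← (P.orderIsoOfFin h).lt_iff_lt, hm]; exact hlt
      · exact congrArg Subtype.val hm
    · rintro ⟨m, hm, rfl⟩
      refine ⟨Finset.orderEmbOfFin_mem _ _ _, ?_⟩
      exact (P.orderIsoOfFin h).lt_iff_lt.2 hm
  rw [this, Finset.card_map, ← Fin.card_Iio l]
  congr 1
  ext x
  simp

/-- `ξ_q(P;Q)` with the position of `r` in `P` expressed as `#{x ∈ P, x < r}`. -/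
def xiProd (q : k) (P Q : Finset (Fin n)) : k :=
  ∏ r ∈ P, negqInt k q ((Q.filter (· ≤ r)).card - (P.filter (· < r)).card)

lemma xiq_eq_xiProd {P Q : Finset (Fin n)} (h : P.card = Q.card) :
    xiq k n q P Q = xiProd q P Q := by
  unfold xiq xiProd
  rw [dif_pos h, ← Finset.prod_coe_sort P]
  refine Fintype.prod_equiv (P.orderIsoOfFin rfl).toEquiv _ _ fun l => ?_
  congr 2
  exact (card_filter_lt_orderIso rfl l).symm

lemma negqInt_zero : negqInt k q 0 = 0 := by simp [negqInt]

lemma negqInt_succ (hq : q ≠ 0) (d : ℕ) :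
    negqInt k q (d + 1) = (-q) ^ (d : ℤ) + (-q) ^ (-1 : ℤ) * negqInt k q d := by
  have hq' : -q ≠ 0 := neg_ne_zero.2 hq
  unfold negqInt
  rw [Finset.sum_range_succ', add_comm, Finset.mul_sum]
  congr 1
  · congr 1; push_cast; ring
  · refine Finset.sum_congr rfl fun s _ => ?_
    rw [← zpow_add₀ hq']
    congr 1; push_cast; ring

/-- The `-q`-integer `[|S|]` as a sum over `S`, the element `i` contributing `-q` to the power
`#{x < i} - #{x > i}`. -/
lemma sum_zpow_eq_negqInt (hq : q ≠ 0) (S : Finset (Fin n)) :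
    ∑ i ∈ S, (-q) ^ (((S.filter (· < i)).card : ℤ) - (S.filter (i < ·)).card) =
      negqInt k q S.card := by
  have hq' : -q ≠ 0 := neg_ne_zero.2 hq
  induction S using Finset.induction_on_max with
  | empty => simp [negqInt]
  | insert a S ha ih =>
    have haS : a ∉ S := fun hh => lt_irrefl _ (ha a hh)
    rw [Finset.card_insert_of_notMem haS, negqInt_succ hq, Finset.sum_insert haS, ← ih,
      Finset.mul_sum]
    congr 1
    · have h1 : (insert a S).filter (· < a) = S := by
        rw [Finset.filter_insert, if_neg (lt_irrefl a)]
        exact Finset.filter_true_of_mem ha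
      have h2 : (insert a S).filter (a < ·) = ∅ := by
        rw [Finset.filter_insert, if_neg (lt_irrefl a)]
        exact Finset.filter_eq_empty_iff.2 fun x hx => (ha x hx).not_gt
      rw [h1, h2]; simp
    · refine Finset.sum_congr rfl fun i hi => ?_
      have hai := ha i hi
      rw [Finset.filter_insert, if_neg hai.not_gt, Finset.filter_insert, if_pos hai,
        Finset.card_insert_of_notMem (fun hh => haS (Finset.mem_filter.1 hh).1),
        ← zpow_add₀ hq']
      congr 1; push_cast; ring

/-- The coefficient of `e'_{T♮} e_T` in the expansion of `e_J e'_N`, for disjoint `J` and `N`. -/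
def coefD (q : k) (J N T : Finset (Fin n)) : k :=
  (-(q - q⁻¹)) ^ (J \ T).card *
    (-q) ^ ((ell n ((J ∪ N) \ (J \ T)) (T \ J) : ℤ) - ell n ((J ∪ N) \ (J \ T)) (J \ T)) *
    xiProd q (J \ T) (T \ J)

/-- The coefficient of the terms in which the new smallest letter `b` of `J` stays in the first row. -/
lemma coefD_insert (hq : q ≠ 0) {b : Fin n} {J N T : Finset (Fin n)} (hb : ∀ x ∈ J, b < x) (hbN : b ∉ N)
    (hT : T ⊆ J ∪ N) :
    coefD q (insert b J) N (insert b T) =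
      (-q) ^ ((T.filter (· < b)).card : ℤ) * coefD q J N T := by
  have hq' : -q ≠ 0 := neg_ne_zero.2 hq
  have hbJ : b ∉ J := fun hh => lt_irrefl _ (hb b hh)
  have hbT : b ∉ T := fun hh => by
    rcases Finset.mem_union.1 (hT hh) with h | h
    exacts [hbJ h, hbN h]
  have h1 : insert b J \ insert b T = J \ T := by
    ext x; simp only [Finset.mem_sdiff, Finset.mem_insert]
    constructor
    · rintro ⟨rfl | h, h2⟩
      · simp at h2
      · exact ⟨h, fun h3 => h2 (Or.inr h3)⟩
    · rintro ⟨h, h2⟩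
      refine ⟨Or.inr h, ?_⟩
      rintro (rfl | h3)
      exacts [hbJ h, h2 h3]
  have h2 : insert b T \ insert b J = T \ J := by
    ext x; simp only [Finset.mem_sdiff, Finset.mem_insert]
    constructor
    · rintro ⟨rfl | h, h2⟩
      · simp at h2
      · exact ⟨h, fun h3 => h2 (Or.inr h3)⟩
    · rintro ⟨h, h2⟩
      refine ⟨Or.inr h, ?_⟩
      rintro (rfl | h3)
      exacts [hbT h, h2 h3]
  have h3 : (insert b J ∪ N) \ (J \ T) = insert b ((J ∪ N) \ (J \ T)) := by
    rw [Finset.insert_union, Finset.insert_sdiff_of_notMem]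
    simp [hbJ]
  have hbU : b ∉ (J ∪ N) \ (J \ T) := by simp [hbJ, hbN]
  have h4 : ell n (insert b ((J ∪ N) \ (J \ T))) (J \ T) = ell n ((J ∪ N) \ (J \ T)) (J \ T) := by
    rw [ell_eq_sum, ell_eq_sum]
    refine Finset.sum_congr rfl fun t ht => ?_
    rw [Finset.filter_insert, if_neg (hb t (Finset.mem_sdiff.1 ht).1).not_gt]
  have h5 : ell n (insert b ((J ∪ N) \ (J \ T))) (T \ J) =
      ell n ((J ∪ N) \ (J \ T)) (T \ J) + (T.filter (· < b)).card := by
    have : T.filter (· < b) = (T \ J).filter (· < b) := by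
      ext x; simp only [Finset.mem_filter, Finset.mem_sdiff]
      exact ⟨fun h => ⟨⟨h.1, fun hx => (hb x hx).not_gt h.2⟩, h.2⟩, fun h => ⟨h.1.1, h.2⟩⟩
    rw [ell_eq_sum, ell_eq_sum, this, Finset.card_filter, ← Finset.sum_add_distrib]
    refine Finset.sum_congr rfl fun t ht => ?_
    rw [Finset.filter_insert]
    split_ifs
    · rw [Finset.card_insert_of_notMem (fun hh => hbU (Finset.mem_filter.1 hh).1)]
    · rfl
  unfold coefD
  rw [h1, h2, h3, h4, h5]
  push_cast
  rw [add_sub_right_comm, zpow_add₀ hq']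
  ring

/-- The coefficient of the terms in which the new smallest letter `b` of `J` changes row; `i` is the
letter it is exchanged with. By `sum_zpow_eq_negqInt`, summing over `i` produces the factor of
`ξ_q` belonging to `b`. -/
lemma coefD_of_notMem (hq : q ≠ 0) {b : Fin n} {J N T : Finset (Fin n)} (hb : ∀ x ∈ J, b < x)
    (hbN : b ∉ N) (hT : T ⊆ J ∪ N) :
    coefD q (insert b J) N T = ∑ i ∈ T.filter (· < b),
      -(q - q⁻¹) * (-q) ^ ((((J ∪ N) \ T).filter fun x => i < x ∧ x < b).card : ℤ) *
        (-q) ^ ((T.filter (· < i)).card : ℤ) * coefD q J N (T.erase i) := by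
  have hq' : -q ≠ 0 := neg_ne_zero.2 hq
  have hbJ : b ∉ J := fun hh => lt_irrefl _ (hb b hh)
  have hbT : b ∉ T := fun hh => by
    rcases Finset.mem_union.1 (hT hh) with h | h
    exacts [hbJ h, hbN h]
  -- the data attached to `T` and `insert b J`
  have hP : insert b J \ T = insert b (J \ T) := Finset.insert_sdiff_of_notMem _ hbT
  have hbP : b ∉ J \ T := fun hh => hbJ (Finset.mem_sdiff.1 hh).1
  have hQ : T \ insert b J = T \ J := by
    ext x; simp only [Finset.mem_sdiff, Finset.mem_insert, not_or]
    exact ⟨fun h => ⟨h.1, h.2.2⟩, fun h => ⟨h.1, fun hx => hbT (hx ▸ h.1), h.2⟩⟩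
  have hU : (insert b J ∪ N) \ insert b (J \ T) = (J ∪ N) \ (J \ T) := by
    ext x; simp only [Finset.mem_sdiff, Finset.mem_insert, Finset.mem_union, not_or]
    constructor
    · rintro ⟨(rfl | h) | h, h2, h3⟩
      · exact absurd rfl h2
      · exact ⟨Or.inl h, h3⟩
      · exact ⟨Or.inr h, h3⟩
    · rintro ⟨h | h, h3⟩
      · exact ⟨Or.inl (Or.inr h), fun hx => hbJ (hx ▸ h), h3⟩
      · exact ⟨Or.inr h, fun hx => hbN (hx ▸ h), h3⟩
  -- the part of `ξ` coming from the elements other than `b`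
  set rest : k := ∏ r ∈ J \ T,
    negqInt k q (((T \ J).filter (· ≤ r)).card - ((J \ T).filter (· < r)).card - 1) with hrest
  have hTlt : (T \ J).filter (· ≤ b) = T.filter (· < b) := by
    ext x; simp only [Finset.mem_filter, Finset.mem_sdiff]
    constructor
    · rintro ⟨⟨h1, h2⟩, h3⟩
      exact ⟨h1, lt_of_le_of_ne h3 fun hx => hbT (hx ▸ h1)⟩
    · rintro ⟨h1, h2⟩
      exact ⟨⟨h1, fun hx => (hb x hx).not_gt h2⟩, h2.le⟩
  have hxi : xiProd q (insert b (J \ T)) (T \ J) =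
      negqInt k q (T.filter (· < b)).card * rest := by
    unfold xiProd
    rw [Finset.prod_insert hbP, hTlt]
    congr 1
    · have hemp : (insert b (J \ T)).filter (· < b) = ∅ := by
        refine Finset.filter_eq_empty_iff.2 fun x hx => ?_
        rcases Finset.mem_insert.1 hx with rfl | hx
        · exact lt_irrefl _
        · exact (hb x (Finset.mem_sdiff.1 hx).1).not_gt
      rw [hemp]
      simp
    · refine Finset.prod_congr rfl fun r hr => ?_
      rw [Finset.filter_insert, if_pos (hb r (Finset.mem_sdiff.1 hr).1),
        Finset.card_insert_of_notMem (fun hh => hbP (Finset.mem_filter.1 hh).1)]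
      congr 1
  have key : ∀ i ∈ T.filter (· < b),
      -(q - q⁻¹) * (-q) ^ ((((J ∪ N) \ T).filter fun x => i < x ∧ x < b).card : ℤ) *
        (-q) ^ ((T.filter (· < i)).card : ℤ) * coefD q J N (T.erase i) =
      (-(q - q⁻¹)) ^ ((J \ T).card + 1) *
        (-q) ^ ((ell n ((J ∪ N) \ (J \ T)) (T \ J) : ℤ) -
          ((((J ∪ N) \ (J \ T)).filter (b < ·)).card + ell n ((J ∪ N) \ (J \ T)) (J \ T))) *
        rest * (-q) ^ ((((T.filter (· < b)).filter (· < i)).card : ℤ) -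
          ((T.filter (· < b)).filter (i < ·)).card) := by
    intro i hi
    obtain ⟨hiT, hib⟩ := Finset.mem_filter.1 hi
    have hiJ : i ∉ J := fun hh => (hb i hh).not_gt hib
    have hP' : J \ T.erase i = J \ T := by
      ext x; simp only [Finset.mem_sdiff, Finset.mem_erase, not_and]
      exact ⟨fun h => ⟨h.1, h.2 fun hx => hiJ (hx ▸ h.1)⟩, fun h => ⟨h.1, fun _ => h.2⟩⟩
    have hQ' : T.erase i \ J = (T \ J).erase i := by
      ext x; simp only [Finset.mem_sdiff, Finset.mem_erase]; tauto
    have hiQ : i ∈ T \ J := Finset.mem_sdiff.2 ⟨hiT, hiJ⟩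
    have hxi' : xiProd q (J \ T) ((T \ J).erase i) = rest := by
      unfold xiProd
      refine Finset.prod_congr rfl fun r hr => ?_
      rw [Finset.filter_erase, Finset.card_erase_of_mem (Finset.mem_filter.2
        ⟨hiQ, (hib.trans (hb r (Finset.mem_sdiff.1 hr).1)).le⟩), Nat.sub_right_comm]
    have hell : ell n ((J ∪ N) \ (J \ T)) (T \ J) = ell n ((J ∪ N) \ (J \ T)) ((T \ J).erase i) +
        (((J ∪ N) \ (J \ T)).filter (i < ·)).card := by
      rw [ell_eq_sum, ell_eq_sum, Finset.sum_erase_add _ _ hiQ]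
    -- elements above `i` are either above `b`, or strictly between `i` and `b`
    have hsplit : (((J ∪ N) \ (J \ T)).filter (i < ·)).card =
        (((J ∪ N) \ (J \ T)).filter (b < ·)).card +
        ((((J ∪ N) \ T).filter fun x => i < x ∧ x < b).card +
          ((T.filter (· < b)).filter (i < ·)).card) := by
      rw [← Finset.card_union_of_disjoint, ← Finset.card_union_of_disjoint]
      · congr 1
        ext x
        simp only [Finset.mem_filter, Finset.mem_union, Finset.mem_sdiff, not_and, not_not]
        constructor
        · rintro ⟨⟨h1, h2⟩, h3⟩
          rcases lt_trichotomy x b with h | h | h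
          · right
            by_cases hx : x ∈ T
            · exact Or.inr ⟨⟨hx, h⟩, h3⟩
            · exact Or.inl ⟨⟨h1, hx⟩, h3, h⟩
          · subst h
            rcases h1 with h1 | h1
            exacts [absurd h1 hbJ, absurd h1 hbN]
          · exact Or.inl ⟨⟨h1, h2⟩, h⟩
        · rintro (⟨h1, h2⟩ | ⟨⟨h1, h2⟩, h3, h4⟩ | ⟨⟨h1, h2⟩, h3⟩)
          · exact ⟨h1, hib.trans h2⟩
          · exact ⟨⟨h1, fun hx => absurd h4 (hb x hx).not_gt⟩, h3⟩
          · exact ⟨⟨Finset.mem_union.1 (hT h1), fun _ => h1⟩, h3⟩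
      · rw [Finset.disjoint_left]
        intro x hx hx'
        have hx1 := (Finset.mem_filter.1 hx).2
        rcases Finset.mem_union.1 hx' with h | h
        · exact (Finset.mem_filter.1 h).2.2.not_gt hx1
        · exact (Finset.mem_filter.1 (Finset.mem_filter.1 h).1).2.not_gt hx1
      · rw [Finset.disjoint_left]
        intro x hx hx'
        exact (Finset.mem_sdiff.1 (Finset.mem_filter.1 hx).1).2
          (Finset.mem_filter.1 (Finset.mem_filter.1 hx').1).1
    have hlow : (T.filter (· < b)).filter (· < i) = T.filter (· < i) := by
      ext x; simp only [Finset.mem_filter]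
      exact ⟨fun h => ⟨h.1.1, h.2⟩, fun h => ⟨⟨h.1, h.2.trans hib⟩, h.2⟩⟩
    unfold coefD
    rw [hP', hQ', hxi', hlow, hell, hsplit]
    push_cast
    have hz : ∀ a b c d e f : ℤ, (-q) ^ (a + (b + (c + d)) - (b + e)) * (-q) ^ (f - d) =
        (-q) ^ c * (-q) ^ f * (-q) ^ (a - e) := by
      intro a b c d e f
      rw [← zpow_add₀ hq', ← zpow_add₀ hq', ← zpow_add₀ hq']
      congr 1; ring
    rw [mul_right_comm _ rest, mul_assoc ((-(q - q⁻¹)) ^ (_ + 1)), hz, pow_succ]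
    ring
  rw [Finset.sum_congr rfl key, ← Finset.mul_sum, sum_zpow_eq_negqInt hq]
  unfold coefD
  rw [hP, hQ, hU, hxi, Finset.card_insert_of_notMem hbP, ell_eq_sum _ (insert _ _),
    Finset.sum_insert hbP, ← ell_eq_sum]
  push_cast
  ring

end Coefficients

/-! ### The straightening law -/

section Straightening

variable {k : Type*} [Field k] {n : ℕ} {q : k} {B : Type*} [Ring B] [Algebra k B]
  {e e' : Fin n → B}

/-- The straightening law for `e_J e'_N` when `J` and `N` are disjoint, by induction on `J`,
the smallest element of `J` being moved across last. -/
lemma QExt.straighten_disjoint (h : QExt q e e') (hq : q ≠ 0) (J N : Finset (Fin n))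
    (hJN : Disjoint J N) :
    eprod e J * eprod e' N = ∑ T ∈ (J ∪ N).powersetCard J.card,
      coefD q J N T • (eprod e' ((J ∪ N) \ T) * eprod e T) := by
  induction J using Finset.induction_on_min with
  | empty => simp [coefD, xiProd, ell]
  | insert b J hb ih =>
    have hbJ : b ∉ J := fun hh => lt_irrefl _ (hb b hh)
    rw [Finset.disjoint_insert_left] at hJN
    obtain ⟨hbN, hJN⟩ := hJN
    have ih := ih hJN
    have hbW : b ∉ J ∪ N := by simp [hbJ, hbN]
    rw [eprod_insert_min hb, mul_assoc, ih, Finset.insert_union,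
      Finset.card_insert_of_notMem hbJ, ← Nat.succ_eq_add_one,
      Finset.powersetCard_succ_insert hbW, Finset.sum_union, Finset.sum_image]
    rotate_left
    · intro S hS T hT hST
      have hS' : b ∉ S := fun hh => hbW ((Finset.mem_powersetCard.1 hS).1 hh)
      have hT' : b ∉ T := fun hh => hbW ((Finset.mem_powersetCard.1 hT).1 hh)
      rw [← Finset.erase_insert hS', ← Finset.erase_insert hT', hST]
    · rw [Finset.disjoint_left]
      intro S hS hS'
      obtain ⟨T, -, rfl⟩ := Finset.mem_image.1 hS'
      exact hbW ((Finset.mem_powersetCard.1 hS).1 (Finset.mem_insert_self _ _))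
    have e1 : ∀ T ∈ (J ∪ N).powersetCard J.card,
        e b * (coefD q J N T • (eprod e' ((J ∪ N) \ T) * eprod e T)) =
        (∑ i ∈ ((J ∪ N) \ T).filter (· < b),
          (-(q - q⁻¹) * (-q) ^ ((((J ∪ N) \ T).filter fun x => i < x ∧ x < b).card : ℤ) *
            (-q) ^ ((T.filter (· < i)).card : ℤ) * coefD q J N T) •
          (eprod e' (insert b (((J ∪ N) \ T).erase i)) * eprod e (insert i T))) +
        coefD q (insert b J) N (insert b T) •
          (eprod e' (insert b (J ∪ N) \ insert b T) * eprod e (insert b T)) := by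
      intro T hT
      have hTW := (Finset.mem_powersetCard.1 hT).1
      have hbT : b ∉ T := fun hh => hbW (hTW hh)
      have hbWT : b ∉ (J ∪ N) \ T := fun hh => hbW (Finset.mem_sdiff.1 hh).1
      have hsd : insert b (J ∪ N) \ insert b T = (J ∪ N) \ T := by
        ext x; simp only [Finset.mem_sdiff, Finset.mem_insert, not_or]
        exact ⟨fun h => ⟨h.1.resolve_left h.2.1, h.2.2⟩,
          fun h => ⟨Or.inr h.1, fun hx => hbW (hx ▸ h.1), h.2⟩⟩
      rw [hsd, coefD_insert hq hb hbN hTW, mul_smul_comm, ← mul_assoc, h.mul_eprod hbWT,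
        sub_mul, mul_assoc _ (e b), h.left.mul_eprod hbT, sub_eq_add_neg, smul_add, add_comm]
      congr 1
      · rw [smul_mul_assoc, Finset.sum_mul, ← neg_smul, smul_smul, Finset.smul_sum]
        refine Finset.sum_congr rfl fun i hi => ?_
        have hiT : i ∉ T := (Finset.mem_sdiff.1 (Finset.mem_filter.1 hi).1).2
        rw [smul_mul_assoc, mul_assoc _ (e i), h.left.mul_eprod hiT, mul_smul_comm, smul_smul,
          smul_smul, zpow_natCast, zpow_natCast]
        congr 1
        ring
      · rw [mul_smul_comm, smul_smul, zpow_natCast, mul_comm]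
    have e2 : ∀ T ∈ (J ∪ N).powersetCard J.card.succ,
        coefD q (insert b J) N T • (eprod e' (insert b (J ∪ N) \ T) * eprod e T) =
        ∑ i ∈ T.filter (· < b),
          (-(q - q⁻¹) * (-q) ^ ((((J ∪ N) \ T).filter fun x => i < x ∧ x < b).card : ℤ) *
            (-q) ^ ((T.filter (· < i)).card : ℤ) * coefD q J N (T.erase i)) •
          (eprod e' (insert b (J ∪ N) \ T) * eprod e T) := by
      intro T hT
      rw [coefD_of_notMem hq hb hbN (Finset.mem_powersetCard.1 hT).1, Finset.sum_smul]
    rw [Finset.mul_sum, Finset.sum_congr rfl e1, Finset.sum_add_distrib,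
      Finset.sum_congr rfl e2]
    congr 1
    -- a term is determined by the exchanged letter `i` and by either the old or the new set
    rw [Finset.sum_sigma', Finset.sum_sigma']
    refine Finset.sum_bij' (fun x _ => ⟨insert x.2 x.1, x.2⟩) (fun x _ => ⟨x.1.erase x.2, x.2⟩)
      ?_ ?_ ?_ ?_ ?_
    · rintro ⟨T, i⟩ hx
      simp only [Finset.mem_sigma, Finset.mem_powersetCard, Finset.mem_filter,
        Finset.mem_sdiff] at hx ⊢
      obtain ⟨⟨h1, h2⟩, ⟨h3, h4⟩, h5⟩ := hx
      exact ⟨⟨Finset.insert_subset h3 h1, by rw [Finset.card_insert_of_notMem h4, h2]⟩,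
        Finset.mem_insert_self _ _, h5⟩
    · rintro ⟨T, i⟩ hx
      simp only [Finset.mem_sigma, Finset.mem_powersetCard, Finset.mem_filter,
        Finset.mem_sdiff] at hx ⊢
      obtain ⟨⟨h1, h2⟩, h3, h4⟩ := hx
      exact ⟨⟨(Finset.erase_subset _ _).trans h1, by rw [Finset.card_erase_of_mem h3, h2]; simp⟩,
        ⟨h1 h3, Finset.notMem_erase _ _⟩, h4⟩
    · rintro ⟨T, i⟩ hx
      simp only [Finset.mem_sigma, Finset.mem_filter, Finset.mem_sdiff] at hx
      simp [Finset.erase_insert hx.2.1.2]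
    · rintro ⟨T, i⟩ hx
      simp only [Finset.mem_sigma, Finset.mem_filter] at hx
      simp [Finset.insert_erase hx.2.1]
    · rintro ⟨T, i⟩ hx
      simp only [Finset.mem_sigma, Finset.mem_powersetCard, Finset.mem_filter,
        Finset.mem_sdiff] at hx
      obtain ⟨⟨h1, h2⟩, ⟨h3, h4⟩, h5⟩ := hx
      have hib : b ≠ i := h5.ne'
      have hbT : b ∉ insert i T := by
        rw [Finset.mem_insert, not_or]
        exact ⟨hib, fun hh => hbW (h1 hh)⟩
      have a1 : insert b (J ∪ N) \ insert i T = insert b (((J ∪ N) \ T).erase i) := by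
        rw [Finset.insert_sdiff_of_notMem _ hbT]
        congr 1
        ext x; simp only [Finset.mem_sdiff, Finset.mem_insert, Finset.mem_erase]; tauto
      have a2 : ((J ∪ N) \ insert i T).filter (fun x => i < x ∧ x < b) =
          ((J ∪ N) \ T).filter (fun x => i < x ∧ x < b) := by
        ext x; simp only [Finset.mem_sdiff, Finset.mem_insert, Finset.mem_filter, not_or]
        exact ⟨fun h => ⟨⟨h.1.1, h.1.2.2⟩, h.2⟩, fun h => ⟨⟨h.1.1, h.2.1.ne', h.1.2⟩, h.2⟩⟩
      have a3 : (insert i T).filter (· < i) = T.filter (· < i) := by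
        rw [Finset.filter_insert, if_neg (lt_irrefl i)]
      dsimp only
      rw [a1, a2, a3, Finset.erase_insert h4]

/-- Adjoining the common elements `D` to both index sets only multiplies the straightening law
by `q^{-|D|}`. For `d ∈ D` the letters `e_d` and `e'_d` can be brought together on the left without
correction terms (`QExt.mul_list_mul_left`, `QExt.mul_list_mul_right`), where
`e_d e'_d = q⁻¹ e'_d e_d`. -/
lemma QExt.straighten_union (h : QExt q e e') (hq : q ≠ 0) (J N : Finset (Fin n))
    (hJN : Disjoint J N) (D : Finset (Fin n)) (hD : Disjoint D (J ∪ N)) :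
    q ^ D.card • (eprod e (J ∪ D) * eprod e' (N ∪ D)) =
      ∑ T ∈ (J ∪ N).powersetCard J.card,
        coefD q J N T • (eprod e' (((J ∪ N) \ T) ∪ D) * eprod e (T ∪ D)) := by
  have hq' : -q ≠ 0 := neg_ne_zero.2 hq
  induction D using Finset.induction_on with
  | empty => simpa using h.straighten_disjoint hq J N hJN
  | insert d D hdD ih =>
    rw [Finset.disjoint_insert_left] at hD
    obtain ⟨hdW, hD⟩ := hD
    have ih := ih hD
    rw [Finset.mem_union, not_or] at hdW
    have hdJ : d ∉ J ∪ D := by simp [hdW.1, hdD]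
    have hdN : d ∉ N ∪ D := by simp [hdW.2, hdD]
    have hcomm : e d * eprod e (J ∪ D) * e' d = e d * e' d * eprod e (J ∪ D) :=
      h.mul_list_mul_left hq d _
    have hL : (-q) ^ ((J ∪ D).filter (· < d)).card • (-q) ^ ((N ∪ D).filter (· < d)).card •
        (eprod e (insert d (J ∪ D)) * eprod e' (insert d (N ∪ D))) =
        q⁻¹ • (e' d * e d * (eprod e (J ∪ D) * eprod e' (N ∪ D))) := by
      rw [← mul_smul_comm, ← smul_mul_assoc, ← h.left.mul_eprod hdJ, ← h.right.mul_eprod hdN,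
        ← mul_assoc, hcomm, h.diag, mul_assoc, smul_mul_assoc]
    have hR : ∀ T ∈ (J ∪ N).powersetCard J.card,
        e' d * e d * (eprod e' (((J ∪ N) \ T) ∪ D) * eprod e (T ∪ D)) =
        (-q) ^ ((J ∪ D).filter (· < d)).card • (-q) ^ ((N ∪ D).filter (· < d)).card •
          (eprod e' (insert d (((J ∪ N) \ T) ∪ D)) * eprod e (insert d (T ∪ D))) := by
      intro T hT
      have hTW := (Finset.mem_powersetCard.1 hT).1
      have hdT : d ∉ T := fun hh => by
        rcases Finset.mem_union.1 (hTW hh) with h | h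
        exacts [hdW.1 h, hdW.2 h]
      have hdT' : d ∉ T ∪ D := by simp [hdT, hdD]
      have hdT'' : d ∉ ((J ∪ N) \ T) ∪ D := by simp [hdW.1, hdW.2, hdD]
      have hcomm' : e' d * e d * eprod e' (((J ∪ N) \ T) ∪ D) =
        e' d * eprod e' (((J ∪ N) \ T) ∪ D) * e d := h.mul_list_mul_right hq d _
      rw [← mul_assoc, hcomm', mul_assoc, h.left.mul_eprod hdT', h.right.mul_eprod hdT'',
        smul_mul_assoc, mul_smul_comm, smul_smul, smul_smul, ← pow_add, ← pow_add]
      congr 2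
      -- both sides count the letters smaller than `d`, which straightening only permutes
      have hDW : ∀ {S : Finset (Fin n)}, S ⊆ J ∪ N →
          ((S ∪ D).filter (· < d)).card = (S.filter (· < d)).card + (D.filter (· < d)).card := by
        intro S hS
        rw [Finset.filter_union, Finset.card_union_of_disjoint]
        exact Finset.disjoint_filter_filter (hD.symm.mono_left hS)
      rw [hDW Finset.sdiff_subset, hDW hTW, hDW Finset.subset_union_left,
        hDW Finset.subset_union_right]
      have c1 : (((J ∪ N) \ T).filter (· < d)).card + (T.filter (· < d)).card =
          ((J ∪ N).filter (· < d)).card := by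
        rw [← Finset.card_union_of_disjoint
          (Finset.disjoint_filter_filter Finset.sdiff_disjoint), ← Finset.filter_union,
          Finset.sdiff_union_of_subset hTW]
      have c2 : (J.filter (· < d)).card + (N.filter (· < d)).card =
          ((J ∪ N).filter (· < d)).card := by
        rw [← Finset.card_union_of_disjoint (Finset.disjoint_filter_filter hJN),
          ← Finset.filter_union]
      omega
    have hmain : (-q) ^ ((J ∪ D).filter (· < d)).card • (-q) ^ ((N ∪ D).filter (· < d)).card •
        (q ^ (D.card + 1) • (eprod e (insert d (J ∪ D)) * eprod e' (insert d (N ∪ D)))) =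
        (-q) ^ ((J ∪ D).filter (· < d)).card • (-q) ^ ((N ∪ D).filter (· < d)).card •
        ∑ T ∈ (J ∪ N).powersetCard J.card, coefD q J N T •
          (eprod e' (insert d (((J ∪ N) \ T) ∪ D)) * eprod e (insert d (T ∪ D))) := by
      rw [smul_comm _ (q ^ (D.card + 1)), smul_comm _ (q ^ (D.card + 1)), hL, smul_smul, pow_succ,
        mul_assoc, mul_inv_cancel₀ hq, mul_one, ← mul_smul_comm, ih, Finset.mul_sum,
        Finset.smul_sum, Finset.smul_sum]
      refine Finset.sum_congr rfl fun T hT => ?_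
      rw [mul_smul_comm, hR T hT, smul_comm (coefD q J N T), smul_comm (coefD q J N T)]
    have hinj : ∀ {a : ℕ} {x y : B}, (-q) ^ a • x = (-q) ^ a • y → x = y := by
      intro a x y hxy
      rw [← inv_smul_smul₀ (pow_ne_zero a hq') x, hxy, inv_smul_smul₀ (pow_ne_zero a hq')]
    have := hinj (hinj hmain)
    simp only [Finset.union_insert]
    rw [Finset.card_insert_of_notMem hdD]
    exact this

end Straightening

section Straightening

variable {k : Type*} [Field k] {n : ℕ} {q : k} {B : Type*} [Ring B] [Algebra k B]
  {e e' : Fin n → B}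

/-- The sets `S` with `X ∩ Y ⊆ S ⊆ X ∪ Y` and `|S| = |X|`, with no order condition. -/
def adm (X Y : Finset (Fin n)) : Finset (Finset (Fin n)) :=
  (X ∪ Y).powerset.filter fun S => X ∩ Y ⊆ S ∧ S.card = X.card

lemma mem_adm {X Y S : Finset (Fin n)} :
    S ∈ adm X Y ↔ S ⊆ X ∪ Y ∧ X ∩ Y ⊆ S ∧ S.card = X.card := by
  simp only [adm, Finset.mem_filter, Finset.mem_powerset]

/-- The coefficient `λ̃_T` attached to the pair `(J, N)`. -/
def lam (q : k) (J N T : Finset (Fin n)) : k :=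
  (-(q - q⁻¹)) ^ (J \ T).card * (-q) ^ (-(Lfun n T J N)) * xiq k n q (J \ T) (T \ J)

/-- The general straightening law for `e_J e'_N`. -/
lemma QExt.straighten (h : QExt q e e') (hq : q ≠ 0) (J N : Finset (Fin n)) :
    q ^ (J ∩ N).card • (eprod e J * eprod e' N) =
      ∑ T ∈ adm J N, lam q J N T • (eprod e' (snat n J N T) * eprod e T) := by
  have h1 : Disjoint (J \ N) (N \ J) := by
    rw [Finset.disjoint_left]; intro x hx hx'
    exact (Finset.mem_sdiff.1 hx').2 (Finset.mem_sdiff.1 hx).1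
  have h2 : Disjoint (J ∩ N) (J \ N ∪ N \ J) := by
    rw [Finset.disjoint_left]; intro x hx hx'
    simp only [Finset.mem_inter, Finset.mem_union, Finset.mem_sdiff] at hx hx'
    tauto
  have hJ : J \ N ∪ J ∩ N = J := Finset.sdiff_union_inter J N
  have hN : N \ J ∪ J ∩ N = N := by rw [Finset.inter_comm]; exact Finset.sdiff_union_inter N J
  have hcard : (J \ N).card + (J ∩ N).card = J.card := Finset.card_sdiff_add_card_inter J N
  have := h.straighten_union hq (J \ N) (N \ J) h1 (J ∩ N) h2
  rw [hJ, hN] at this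
  rw [this]
  refine Finset.sum_bij' (fun T _ => T ∪ J ∩ N) (fun T _ => T \ (J ∩ N)) ?_ ?_ ?_ ?_ ?_
  · intro T hT
    obtain ⟨hT1, hT2⟩ := Finset.mem_powersetCard.1 hT
    rw [mem_adm]
    refine ⟨?_, Finset.subset_union_right, ?_⟩
    · intro x hx
      rcases Finset.mem_union.1 hx with hx | hx
      · have := hT1 hx
        simp only [Finset.mem_union, Finset.mem_sdiff] at this ⊢; tauto
      · exact Finset.mem_union_left _ (Finset.mem_inter.1 hx).1
    · rw [Finset.card_union_of_disjoint (h2.symm.mono_left hT1), hT2, hcard]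
  · intro T hT
    obtain ⟨hT1, hT2, hT3⟩ := mem_adm.1 hT
    rw [Finset.mem_powersetCard]
    constructor
    · intro x hx
      obtain ⟨hx, hx'⟩ := Finset.mem_sdiff.1 hx
      have := hT1 hx
      simp only [Finset.mem_union, Finset.mem_sdiff, Finset.mem_inter] at this hx' ⊢; tauto
    · rw [Finset.card_sdiff_of_subset hT2, hT3]; omega
  · intro T hT
    obtain ⟨hT1, hT2⟩ := Finset.mem_powersetCard.1 hT
    rw [Finset.union_sdiff_cancel_right (h2.symm.mono_left hT1)]
  · intro T hT
    exact Finset.sdiff_union_of_subset (mem_adm.1 hT).2.1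
  · intro T hT
    obtain ⟨hT1, hT2⟩ := Finset.mem_powersetCard.1 hT
    have hTm : ∀ x ∈ T, (x ∈ J ∧ x ∉ N) ∨ (x ∈ N ∧ x ∉ J) := by
      intro x hx
      have := hT1 hx
      simpa only [Finset.mem_union, Finset.mem_sdiff] using this
    have s1 : snat n J N (T ∪ J ∩ N) = ((J \ N ∪ N \ J) \ T) ∪ J ∩ N := by
      ext x
      have := hTm x
      simp only [snat, Finset.mem_union, Finset.mem_sdiff, Finset.mem_inter]
      tauto
    have s2 : J \ (T ∪ J ∩ N) = (J \ N) \ T := by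
      ext x; simp only [Finset.mem_union, Finset.mem_sdiff, Finset.mem_inter]; tauto
    have s3 : (T ∪ J ∩ N) \ J = T \ (J \ N) := by
      ext x
      have := hTm x
      simp only [Finset.mem_union, Finset.mem_sdiff, Finset.mem_inter]; tauto
    have s4 : ((T ∪ J ∩ N) \ snat n J N (T ∪ J ∩ N)) ∪ (N \ J) =
        (J \ N ∪ N \ J) \ ((J \ N) \ T) := by
      ext x
      have := hTm x
      simp only [snat, Finset.mem_union, Finset.mem_sdiff, Finset.mem_inter]
      tauto
    have s5 : ((J \ N) \ T).card = (T \ (J \ N)).card := by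
      have e1 := Finset.card_sdiff_add_card_inter T (J \ N)
      have e2 := Finset.card_sdiff_add_card_inter (J \ N) T
      rw [Finset.inter_comm] at e1
      omega
    rw [s1]
    congr 1
    unfold coefD lam Lfun
    rw [s4, s2, s3, xiq_eq_xiProd s5, neg_sub (ell n _ _ : ℤ)]

/-- Outside the componentwise order the coefficient `λ̃_T` vanishes, one of the factors of
`ξ_q` being `[0]_{-q}`. -/
lemma lam_eq_zero {J N T : Finset (Fin n)} (hT : T.card = J.card) (h : ¬ setLE n T J) :
    lam q J N T = 0 := by
  obtain ⟨l, hl⟩ : ∃ l : Fin T.card, (J.orderIsoOfFin hT.symm l : Fin n) <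
      (T.orderIsoOfFin rfl l : Fin n) := by
    by_contra hcon
    push Not at hcon
    exact h ⟨hT, fun _ l => hcon l⟩
  set x : Fin n := (J.orderIsoOfFin hT.symm l).1 with hx
  have hxJ : x ∈ J := (J.orderIsoOfFin hT.symm l).2
  have hJx : (J.filter (· ≤ x)).card = l + 1 := by
    have : J.filter (· ≤ x) = insert x (J.filter (· < x)) := by
      ext y; simp only [Finset.mem_filter, Finset.mem_insert, le_iff_eq_or_lt]
      constructor
      · rintro ⟨h1, rfl | h2⟩
        exacts [Or.inl rfl, Or.inr ⟨h1, h2⟩]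
      · rintro (rfl | h2)
        exacts [⟨hxJ, Or.inl rfl⟩, ⟨h2.1, Or.inr h2.2⟩]
    rw [this, Finset.card_insert_of_notMem (by simp), card_filter_lt_orderIso]
  have hTx : (T.filter (· ≤ x)).card ≤ l := by
    rw [← card_filter_lt_orderIso (rfl : T.card = T.card) l]
    refine Finset.card_le_card fun y hy => ?_
    rw [Finset.mem_filter] at hy ⊢
    exact ⟨hy.1, hy.2.trans_lt hl⟩
  have split : ∀ P Q : Finset (Fin n), (P.filter (· ≤ x)).card =
      ((P \ Q).filter (· ≤ x)).card + ((P ∩ Q).filter (· ≤ x)).card := by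
    intro P Q
    rw [← Finset.card_union_of_disjoint, ← Finset.filter_union, Finset.sdiff_union_inter]
    exact Finset.disjoint_filter_filter (Finset.disjoint_sdiff_inter P Q)
  have hlt : ((T \ J).filter (· ≤ x)).card < ((J \ T).filter (· ≤ x)).card := by
    have e1 := split J T
    have e2 := split T J
    rw [Finset.inter_comm] at e2
    omega
  have hcard : (J \ T).card = (T \ J).card := by
    have e1 := Finset.card_sdiff_add_card_inter T J
    have e2 := Finset.card_sdiff_add_card_inter J T
    rw [Finset.inter_comm] at e1
    omega
  -- `r` is the largest element of `J \ T` below `x`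
  have hne : ((J \ T).filter (· ≤ x)).Nonempty := Finset.card_pos.1 (by omega)
  set r := ((J \ T).filter (· ≤ x)).max' hne with hr
  obtain ⟨hrJ, hrx⟩ := Finset.mem_filter.1 (Finset.max'_mem _ hne)
  have c1 : ((J \ T).filter (· ≤ x)).card ≤ ((J \ T).filter (· < r)).card + 1 := by
    rw [← Finset.card_insert_of_notMem (show r ∉ (J \ T).filter (· < r) by simp)]
    refine Finset.card_le_card fun y hy => ?_
    rw [Finset.mem_insert, Finset.mem_filter]
    rcases (Finset.le_max' _ y hy).eq_or_lt with h1 | h1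
    exacts [Or.inl h1, Or.inr ⟨(Finset.mem_filter.1 hy).1, h1⟩]
  have c2 : ((T \ J).filter (· ≤ r)).card ≤ ((T \ J).filter (· ≤ x)).card := by
    refine Finset.card_le_card fun y hy => ?_
    rw [Finset.mem_filter] at hy ⊢
    exact ⟨hy.1, hy.2.trans hrx⟩
  have : xiProd q (J \ T) (T \ J) = 0 := by
    refine Finset.prod_eq_zero (i := r) hrJ ?_
    rw [Nat.sub_eq_zero_of_le (by omega), negqInt_zero]
  rw [lam, xiq_eq_xiProd hcard, this, mul_zero]

lemma lam_self (J N : Finset (Fin n)) : lam q J N J = 1 := by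
  simp [lam, Lfun, ell, xiq]

end Straightening

/-! ### A model with dual functionals -/

section Model

variable {k : Type*} [Field k] {n : ℕ} {q : k}

/-- The operators on the four-dimensional space with basis `1, e₀, e'₀, e'₀ e₀` (in this order)
that serve to adjoin a column to the `q`-exterior algebra: left multiplication by `e₀`. -/
def matA (q : k) : Matrix (Fin 4) (Fin 4) k :=
  !![0, 0, 0, 0; 1, 0, 0, 0; 0, 0, 0, 0; 0, 0, q⁻¹, 0]

/-- Left multiplication by `e'₀`. -/
def matA' (k : Type*) [Field k] : Matrix (Fin 4) (Fin 4) k :=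
  !![0, 0, 0, 0; 0, 0, 0, 0; 1, 0, 0, 0; 0, 1, 0, 0]

/-- The diagonal matrix of the factors picked up by a later `e_j` when it passes the monomials in
`e₀` and `e'₀`. -/
def matK (q : k) : Matrix (Fin 4) (Fin 4) k :=
  !![1, 0, 0, 0; 0, -q, 0, 0; 0, 0, 1, 0; 0, 0, 0, -q]

/-- The diagonal matrix of the factors picked up by a later `e'_j`. -/
def matK' (q : k) : Matrix (Fin 4) (Fin 4) k :=
  !![1, 0, 0, 0; 0, 1, 0, 0; 0, 0, -q, 0; 0, 0, 0, -q]

/-- The correction term which turns `e'₀` into `e₀` while a later `e_j` becomes `e'_j`. -/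
def matC (q : k) : Matrix (Fin 4) (Fin 4) k :=
  !![0, 0, 0, 0; 0, 0, -(q - q⁻¹), 0; 0, 0, 0, 0; 0, 0, 0, 0]

lemma mat_AA : matA q * matA q = 0 := by
  ext i j; fin_cases i <;> fin_cases j <;>
    simp [matA, Matrix.mul_apply, Fin.sum_univ_four]

lemma mat_A'A' : matA' k * matA' k = 0 := by
  ext i j; fin_cases i <;> fin_cases j <;>
    simp [matA', Matrix.mul_apply, Fin.sum_univ_four]

lemma mat_AA' : matA q * matA' k = q⁻¹ • (matA' k * matA q) := by
  ext i j; fin_cases i <;> fin_cases j <;>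
    simp [matA, matA', Matrix.mul_apply, Fin.sum_univ_four]

lemma mat_KA : matK q * matA q = (-q) • (matA q * matK q) := by
  ext i j; fin_cases i <;> fin_cases j <;>
    simp [matA, matK, Matrix.mul_apply, Fin.sum_univ_four]

lemma mat_KA' : matK q * matA' k = matA' k * matK q := by
  ext i j; fin_cases i <;> fin_cases j <;>
    simp [matA', matK, Matrix.mul_apply, Fin.sum_univ_four]

lemma mat_K'A (hq : q ≠ 0) : matK' q * matA q = matA q * matK' q := by
  ext i j; fin_cases i <;> fin_cases j <;>
    simp [matA, matK', Matrix.mul_apply, Fin.sum_univ_four] <;> field_simp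

lemma mat_K'A' : matK' q * matA' k = (-q) • (matA' k * matK' q) := by
  ext i j; fin_cases i <;> fin_cases j <;>
    simp [matA', matK', Matrix.mul_apply, Fin.sum_univ_four]

lemma mat_KK' : matK q * matK' q = matK' q * matK q := by
  ext i j; fin_cases i <;> fin_cases j <;>
    simp [matK, matK', Matrix.mul_apply, Fin.sum_univ_four]

lemma mat_CK (hq : q ≠ 0) : matC q * matK q = (-q⁻¹) • (matK q * matC q) := by
  ext i j; fin_cases i <;> fin_cases j <;>
    simp [matK, matC, Matrix.mul_apply, Fin.sum_univ_four] <;> field_simp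

lemma mat_CK' (hq : q ≠ 0) : matC q * matK' q = (-q) • (matK' q * matC q) := by
  ext i j; fin_cases i <;> fin_cases j <;>
    simp [matK', matC, Matrix.mul_apply, Fin.sum_univ_four] <;> field_simp

lemma mat_CA : matC q * matA q = (-q) • (matA q * matC q) := by
  ext i j; fin_cases i <;> fin_cases j <;>
    simp [matA, matC, Matrix.mul_apply, Fin.sum_univ_four]

lemma mat_CA' (hq : q ≠ 0) : matC q * matA' k = matA' k * matC q - (q - q⁻¹) • (matK' q * matA q) := by
  ext i j; fin_cases i <;> fin_cases j <;>
    simp [matA, matA', matK', matC, Matrix.mul_apply, Fin.sum_univ_four] <;> field_simp <;> ring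

lemma mat_CC : matC q * matC q = 0 := by
  ext i j; fin_cases i <;> fin_cases j <;>
    simp [matC, Matrix.mul_apply, Fin.sum_univ_four]

/-- The generators of the `q`-exterior algebra with one more column, built from those of `B`. -/
def stepE {B : Type*} [Ring B] [Algebra k B] (q : k) (e e' : Fin n → B) :
    Fin (n + 1) → Matrix (Fin 4) (Fin 4) k ⊗[k] B :=
  Fin.cons (matA q ⊗ₜ[k] 1) fun j => matK q ⊗ₜ[k] e j + matC q ⊗ₜ[k] e' j

/-- The second row of generators of the algebra with one more column. -/
def stepE' {B : Type*} [Ring B] [Algebra k B] (q : k) (e' : Fin n → B) :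
    Fin (n + 1) → Matrix (Fin 4) (Fin 4) k ⊗[k] B :=
  Fin.cons (matA' k ⊗ₜ[k] 1) fun j => matK' q ⊗ₜ[k] e' j

open TensorProduct Algebra.TensorProduct in
lemma QExt.step {B : Type*} [Ring B] [Algebra k B] {e e' : Fin n → B} (h : QExt q e e')
    (hq : q ≠ 0) : QExt q (stepE q e e') (stepE' q e') where
  left :=
    { sq := by
        intro i
        refine Fin.cases ?_ (fun i => ?_) i
        · simp [stepE, mat_AA]
        · simp only [stepE, Fin.cons_succ, mul_add, add_mul, tmul_mul_tmul, h.left.sq, h.right.sq,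
            h.diag, mat_CC, mat_CK hq, tmul_zero, zero_tmul, tmul_smul, smul_tmul', neg_smul,
            neg_tmul]
          module
      anti := by
        intro i j
        refine Fin.cases ?_ (fun i => ?_) i <;> refine Fin.cases ?_ (fun j => ?_) j
        · intro h; exact absurd h (lt_irrefl _)
        · intro _
          simp only [stepE, Fin.cons_succ, Fin.cons_zero, mul_add, add_mul, tmul_mul_tmul,
            mul_one, one_mul, mat_KA, mat_CA, tmul_smul, smul_tmul', smul_add]
        · intro h; exact absurd h (Fin.not_lt_zero _)
        · intro hij
          rw [Fin.succ_lt_succ_iff] at hij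
          simp only [stepE, Fin.cons_succ, mul_add, add_mul, tmul_mul_tmul,
            h.left.anti _ _ hij, h.right.anti _ _ hij, h.gt _ _ hij, h.lt _ _ hij, mat_CC,
            mat_CK hq, zero_tmul, tmul_smul, tmul_sub, ← smul_tmul']
          match_scalars <;> field_simp <;> ring }
  right :=
    { sq := by
        intro i
        refine Fin.cases ?_ (fun i => ?_) i
        · simp [stepE', mat_A'A']
        · simp [stepE', h.right.sq]
      anti := by
        intro i j
        refine Fin.cases ?_ (fun i => ?_) i <;> refine Fin.cases ?_ (fun j => ?_) j
        · intro h; exact absurd h (lt_irrefl _)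
        · intro _
          simp only [stepE', Fin.cons_succ, Fin.cons_zero, tmul_mul_tmul,
            mul_one, one_mul, mat_K'A', smul_tmul']
        · intro h; exact absurd h (Fin.not_lt_zero _)
        · intro hij
          rw [Fin.succ_lt_succ_iff] at hij
          simp only [stepE', Fin.cons_succ, tmul_mul_tmul, h.right.anti _ _ hij, tmul_smul] }
  diag := by
    intro i
    refine Fin.cases ?_ (fun i => ?_) i
    · simp [stepE, stepE', mat_AA', smul_tmul']
    · simp only [stepE, stepE', Fin.cons_succ, mul_add, add_mul, tmul_mul_tmul, h.right.sq,
        h.diag, mat_KK', tmul_zero, tmul_smul, add_zero]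
  lt := by
    intro i j
    refine Fin.cases ?_ (fun i => ?_) i <;> refine Fin.cases ?_ (fun j => ?_) j
    · intro h; exact absurd h (lt_irrefl _)
    · intro _
      simp [stepE, stepE', mat_K'A hq]
    · intro h; exact absurd h (Fin.not_lt_zero _)
    · intro hij
      rw [Fin.succ_lt_succ_iff] at hij
      simp only [stepE, stepE', Fin.cons_succ, mul_add, add_mul, tmul_mul_tmul,
        h.right.anti _ _ hij, h.lt _ _ hij, mat_KK', mat_CK' hq, tmul_smul, ← smul_tmul']
  gt := by
    intro i j
    refine Fin.cases ?_ (fun i => ?_) i <;> refine Fin.cases ?_ (fun j => ?_) j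
    · intro h; exact absurd h (lt_irrefl _)
    · intro _
      simp only [stepE, stepE', Fin.cons_succ, Fin.cons_zero, mul_add, add_mul, tmul_mul_tmul,
        mul_one, one_mul, mat_KA', mat_CA' hq, sub_tmul, ← smul_tmul']
      abel
    · intro h; exact absurd h (Fin.not_lt_zero _)
    · intro hij
      rw [Fin.succ_lt_succ_iff] at hij
      simp only [stepE, stepE', Fin.cons_succ, mul_add, add_mul, tmul_mul_tmul,
        h.right.anti _ _ hij, h.gt _ _ hij, mat_KK', mat_CK' hq, tmul_smul, tmul_sub,
        ← smul_tmul']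
      match_scalars <;> field_simp <;> ring

end Model

section Functional

universe u

open TensorProduct Algebra.TensorProduct

variable {k : Type*} [Field k] {n : ℕ} {q : k}

/-- The set `{i | i + 1 ∈ M}`. -/
def tailSet (M : Finset (Fin (n + 1))) : Finset (Fin n) :=
  Finset.univ.filter fun i => i.succ ∈ M

lemma tailSet_ext {M M' : Finset (Fin (n + 1))} (h0 : 0 ∈ M ↔ 0 ∈ M')
    (h : tailSet M = tailSet M') : M = M' := by
  ext i
  refine Fin.cases h0 (fun i => ?_) i
  simpa [tailSet] using Finset.ext_iff.1 h i

lemma eprod_map_succ {B : Type*} [Ring B] (f : Fin (n + 1) → B)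
    (M : Finset (Fin n)) :
    eprod f (M.map (Fin.succEmb n)) = eprod (fun j => f j.succ) M := by
  induction M using Finset.induction_on_min with
  | empty => simp
  | insert a M ha ih =>
    rw [Finset.map_insert, eprod_insert_min, ih, eprod_insert_min ha]
    · rfl
    · intro x hx
      obtain ⟨y, hy, rfl⟩ := Finset.mem_map.1 hx
      exact Fin.succ_lt_succ_iff.2 (ha y hy)

lemma eprod_eq_tailSet {B : Type*} [Ring B] (f : Fin (n + 1) → B)
    (M : Finset (Fin (n + 1))) :
    eprod f M = f 0 ^ (if 0 ∈ M then 1 else 0) * eprod (fun j => f j.succ) (tailSet M) := by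
  rw [← eprod_map_succ]
  split_ifs with h
  · rw [pow_one, ← eprod_insert_min]
    · congr 1
      ext i
      refine Fin.cases ?_ (fun i => ?_) i
      · simp [h]
      · simp [tailSet]
    · intro x hx
      obtain ⟨y, hy, rfl⟩ := Finset.mem_map.1 hx
      exact Fin.succ_pos _
  · rw [pow_zero, one_mul]
    congr 1
    ext i
    refine Fin.cases ?_ (fun i => ?_) i
    · simp [h]
    · simp [tailSet]

/-- Apply a `4 × 4` matrix to the vacuum vector and read off the coordinate `x`. -/
def coord {B : Type*} [Ring B] [Algebra k B] (x : Fin 4) :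
    Matrix (Fin 4) (Fin 4) k ⊗[k] B →ₗ[k] B :=
  TensorProduct.lift (LinearMap.lsmul k B ∘ₗ Matrix.entryLinearMap k k x 0)

lemma coord_tmul {B : Type*} [Ring B] [Algebra k B] (x : Fin 4) (Z : Matrix (Fin 4) (Fin 4) k)
    (b : B) : coord x (Z ⊗ₜ[k] b) = Z x 0 • b := by
  simp [coord]

lemma coord_mul {B : Type*} [Ring B] [Algebra k B] {e e' : Fin n → B} (x : Fin 4)
    (y : Matrix (Fin 4) (Fin 4) k ⊗[k] B) (j : Fin n) :
    coord x (y * stepE q e e' j.succ) = coord x y * e j := by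
  induction y using TensorProduct.induction_on with
  | zero => simp
  | add y z hy hz => rw [add_mul, map_add, hy, hz, map_add, add_mul]
  | tmul Z b =>
    have h1 : (Z * matK q) x 0 = Z x 0 := by
      simp [matK, Matrix.mul_apply, Fin.sum_univ_four]
    have h2 : (Z * matC q) x 0 = 0 := by
      simp [matC, Matrix.mul_apply, Fin.sum_univ_four]
    simp only [stepE, Fin.cons_succ, mul_add, tmul_mul_tmul, map_add, coord_tmul, h1, h2,
      zero_smul, add_zero, smul_mul_assoc]

lemma coord_mul_eprod {B : Type*} [Ring B] [Algebra k B] {e e' : Fin n → B} (x : Fin 4)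
    (y : Matrix (Fin 4) (Fin 4) k ⊗[k] B) (I : Finset (Fin n)) :
    coord x (y * eprod (fun j => stepE q e e' j.succ) I) = coord x y * eprod e I := by
  induction I using Finset.induction_on_min generalizing y with
  | empty => simp
  | insert a I ha ih =>
    rw [eprod_insert_min ha, eprod_insert_min ha, ← mul_assoc, ih, coord_mul, mul_assoc]

lemma eprod_stepE' {B : Type*} [Ring B] [Algebra k B] {e' : Fin n → B} (M : Finset (Fin n)) :
    eprod (fun j => stepE' q e' j.succ) M = (matK' q ^ M.card) ⊗ₜ[k] eprod e' M := by
  induction M using Finset.induction_on_min with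
  | empty => simp [Algebra.TensorProduct.one_def]
  | insert a M ha ih =>
    rw [eprod_insert_min ha, eprod_insert_min ha, ih, Finset.card_insert_of_notMem
      (fun h => lt_irrefl _ (ha a h)), pow_succ']
    simp [stepE']

lemma matK'_pow (m : ℕ) : matK' q ^ m =
    !![1, 0, 0, 0; 0, 1, 0, 0; 0, 0, (-q) ^ m, 0; 0, 0, 0, (-q) ^ m] := by
  induction m with
  | zero => ext i j; fin_cases i <;> fin_cases j <;> simp
  | succ m ih =>
    rw [pow_succ, ih]
    ext i j; fin_cases i <;> fin_cases j <;>
      simp [matK', Matrix.mul_apply, Fin.sum_univ_four, pow_succ]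

/-- The index in `Fin 4` of the basis vector `e'₀^δ e₀^ε`, where `δ` and `ε` are the truth values of
`a` and `b`. -/
def code (a b : Prop) [Decidable a] [Decidable b] : Fin 4 :=
  if a then (if b then 3 else 2) else (if b then 1 else 0)

lemma coord_eprod {B : Type*} [Ring B] [Algebra k B] {e e' : Fin n → B} (x : Fin 4)
    (M I : Finset (Fin (n + 1))) :
    coord x (eprod (stepE' q e') M * eprod (stepE q e e') I) =
      if x = code (0 ∈ M) (0 ∈ I) then eprod e' (tailSet M) * eprod e (tailSet I) else 0 := by
  have h0 : stepE q e e' 0 = matA q ⊗ₜ[k] 1 := rfl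
  have h0' : stepE' q e' 0 = matA' k ⊗ₜ[k] 1 := rfl
  rw [eprod_eq_tailSet, eprod_eq_tailSet (stepE q e e'), ← mul_assoc,
    coord_mul_eprod, eprod_stepE',
    h0, h0', Algebra.TensorProduct.tmul_pow, Algebra.TensorProduct.tmul_pow, tmul_mul_tmul,
    tmul_mul_tmul, coord_tmul, one_pow, one_pow, one_mul, mul_one, smul_mul_assoc]
  have key : ((matA' k ^ if 0 ∈ M then 1 else 0) * matK' q ^ (tailSet M).card *
      matA q ^ if 0 ∈ I then 1 else 0) x 0 = if x = code (0 ∈ M) (0 ∈ I) then 1 else 0 := by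
    rw [matK'_pow]
    by_cases hM : (0 : Fin (n + 1)) ∈ M <;> by_cases hI : (0 : Fin (n + 1)) ∈ I <;>
      simp only [hM, hI, code, if_true, if_false, pow_one, pow_zero, one_mul, mul_one] <;>
      fin_cases x <;> simp [matA, matA', Matrix.mul_apply, Fin.sum_univ_four]
  rw [key, ite_smul, one_smul, zero_smul]

/-- The ordered monomials `e'_M e_I` are linearly independent in a suitable algebra satisfying
the relations `QExt`; independence is expressed by dual functionals. -/
lemma exists_model {k : Type u} [Field k] {q : k} (hq : q ≠ 0) (n : ℕ) :
    ∃ (B : Type u) (_ : Ring B) (_ : Algebra k B) (e e' : Fin n → B), QExt q e e' ∧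
      ∃ φ : Finset (Fin n) → Finset (Fin n) → B →ₗ[k] k, ∀ M I M' I' : Finset (Fin n),
        φ M I (eprod e' M' * eprod e I') = if M' = M ∧ I' = I then 1 else 0 := by
  induction n with
  | zero =>
    refine ⟨k, inferInstance, inferInstance, Fin.elim0, Fin.elim0, ⟨⟨?_, ?_⟩, ⟨?_, ?_⟩, ?_, ?_, ?_⟩,
      fun _ _ => LinearMap.id, fun M I M' I' => ?_⟩
    iterate 7 exact fun i => i.elim0
    rw [Subsingleton.elim M' ∅, Subsingleton.elim I' ∅, Subsingleton.elim M ∅,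
      Subsingleton.elim I ∅]
    simp
  | succ n ih =>
    obtain ⟨B, _, _, e, e', h, φ, hφ⟩ := ih
    refine ⟨Matrix (Fin 4) (Fin 4) k ⊗[k] B, inferInstance, inferInstance, stepE q e e',
      stepE' q e', h.step hq,
      fun M I => φ (tailSet M) (tailSet I) ∘ₗ coord (code (0 ∈ M) (0 ∈ I)), fun M I M' I' => ?_⟩
    rw [LinearMap.comp_apply, coord_eprod, apply_ite (φ _ _), hφ, map_zero]
    have hcode : code (0 ∈ M) (0 ∈ I) = code (0 ∈ M') (0 ∈ I') ↔
        ((0 ∈ M' ↔ 0 ∈ M) ∧ (0 ∈ I' ↔ 0 ∈ I)) := by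
      by_cases h1 : (0 : Fin (n + 1)) ∈ M <;> by_cases h2 : (0 : Fin (n + 1)) ∈ I <;>
        by_cases h3 : (0 : Fin (n + 1)) ∈ M' <;> by_cases h4 : (0 : Fin (n + 1)) ∈ I' <;>
        simp [code, h1, h2, h3, h4]
    have hiff : (code (0 ∈ M) (0 ∈ I) = code (0 ∈ M') (0 ∈ I') ∧
        tailSet M' = tailSet M ∧ tailSet I' = tailSet I) ↔ (M' = M ∧ I' = I) := by
      rw [hcode]
      constructor
      · rintro ⟨⟨h1, h2⟩, h3, h4⟩
        exact ⟨tailSet_ext h1 h3, tailSet_ext h2 h4⟩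
      · rintro ⟨rfl, rfl⟩
        exact ⟨⟨Iff.rfl, Iff.rfl⟩, rfl, rfl⟩
    simp only [← hiff, ite_and]

end Functional

/-! ### The coaction of a quantum matrix -/

section Coaction

open TensorProduct Algebra.TensorProduct

/-- The defining relations of `O_q(M_n(k))`, for a matrix `x` of elements of an algebra. -/
structure QMatrix {k : Type*} [Field k] {n : ℕ} (q : k) {R : Type*} [Ring R] [Algebra k R]
    (x : Fin n → Fin n → R) : Prop where
  col : ∀ i l j, i < l → x i j * x l j = q • (x l j * x i j)
  row : ∀ i j m, j < m → x i j * x i m = q • (x i m * x i j)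
  swap : ∀ i j l m, i < l → m < j → x i j * x l m = x l m * x i j
  mixed : ∀ i j l m, i < l → j < m →
    x i j * x l m = x l m * x i j + (q - q⁻¹) • (x i m * x l j)

lemma qMatrix_X (k : Type*) [Field k] (n : ℕ) (q : k) : QMatrix q (X k n q) where
  col i l j h := by
    have := RingQuot.mkAlgHom_rel k (Rel.col (q := q) (j := j) h)
    simp only [map_mul, map_smul] at this
    exact this
  row i j m h := by
    have := RingQuot.mkAlgHom_rel k (Rel.row (q := q) (i := i) h)
    simp only [map_mul, map_smul] at this
    exact this
  swap i j l m h1 h2 := by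
    have := RingQuot.mkAlgHom_rel k (Rel.swap (q := q) h1 h2)
    simp only [map_mul] at this
    exact this
  mixed i j l m h1 h2 := by
    have := RingQuot.mkAlgHom_rel k (Rel.mixed (q := q) h1 h2)
    simp only [map_mul, map_smul, map_add] at this
    exact this

variable {k : Type*} [Field k] {n : ℕ} {q : k} {R : Type*} [Ring R] [Algebra k R]
  {x : Fin n → Fin n → R} {B : Type*} [Ring B] [Algebra k B]
  {e e' : Fin n → B}

/-- Two double sums agree as soon as their diagonal terms and their symmetrised off-diagonal
terms agree. -/
lemma sum_sum_eq {C : Type*} [AddCommGroup C] {F G : Fin n → Fin n → C}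
    (h1 : ∀ a, F a a = G a a) (h2 : ∀ a b, a < b → F a b + F b a = G a b + G b a) :
    ∑ a, ∑ b, F a b = ∑ a, ∑ b, G a b := by
  rw [← sub_eq_zero, ← Finset.sum_sub_distrib]
  simp only [← Finset.sum_sub_distrib]
  rw [← Fintype.sum_prod_type' (f := fun a b => F a b - G a b)]
  refine Finset.sum_involution (fun p _ => p.swap) ?_ ?_ (fun _ _ => Finset.mem_univ _)
    (fun _ _ => Prod.swap_swap _)
  · rintro ⟨a, b⟩ -
    simp only [Prod.swap_prod_mk]
    rw [sub_add_sub_comm, sub_eq_zero]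
    rcases lt_trichotomy a b with h | rfl | h
    · exact h2 _ _ h
    · rw [h1]
    · rw [add_comm, h2 _ _ h, add_comm]
  · rintro ⟨a, b⟩ - hne hab
    obtain rfl : b = a := (Prod.mk.inj hab).1
    exact hne (sub_eq_zero.2 (h1 _))

/-- The coaction of a quantum matrix on the generators of the `q`-exterior algebra:
`g_j = ∑_i x_{ij} ⊗ e_i`. -/
def coact (k : Type*) [Field k] {n : ℕ} {R : Type*} [Ring R] [Algebra k R]
    {B : Type*} [Ring B] [Algebra k B] (x : Fin n → Fin n → R) (e : Fin n → B) (j : Fin n) : R ⊗[k] B :=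
  ∑ i, x i j ⊗ₜ[k] e i

lemma coact_mul (e f : Fin n → B) (i j : Fin n) :
    coact k x e i * coact k x f j =
      ∑ a, ∑ b, (x a i * x b j) ⊗ₜ[k] (e a * f b) := by
  simp only [coact, Finset.sum_mul_sum, tmul_mul_tmul]

lemma QAnti.coact (h : QAnti q e) (hx : QMatrix q x) (hq : q ≠ 0) : QAnti q (coact k x e) where
  sq := by
    intro i
    rw [coact_mul, show (0 : R ⊗[k] B) = ∑ a : Fin n, ∑ b : Fin n, 0 by simp]
    refine sum_sum_eq (C := R ⊗[k] B) (fun a => ?_) fun a b hab => ?_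
    · rw [h.sq, tmul_zero]
    rw [hx.col _ _ i hab, h.anti _ _ hab, ← smul_tmul', tmul_smul]
    module
  anti := by
    intro i j hij
    rw [coact_mul, coact_mul]
    simp only [Finset.smul_sum]
    refine sum_sum_eq (C := R ⊗[k] B) (fun a => ?_) fun a b hab => ?_
    · rw [h.sq, tmul_zero, tmul_zero, smul_zero]
    rw [hx.mixed _ _ _ _ hab hij, hx.swap _ _ _ _ hab hij, h.anti _ _ hab]
    simp only [tmul_smul, add_tmul, ← smul_tmul']
    match_scalars <;> field_simp <;> ring

/-- A quantum matrix acts on each row of generators, and preserves the relations between the rows. -/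
lemma QExt.coact (h : QExt q e e') (hx : QMatrix q x) (hq : q ≠ 0) : QExt q (coact k x e) (coact k x e') where
  left := h.left.coact hx hq
  right := h.right.coact hx hq
  diag := by
    intro i
    rw [coact_mul, coact_mul]
    simp only [Finset.smul_sum]
    refine sum_sum_eq (C := R ⊗[k] B) (fun a => ?_) fun a b hab => ?_
    · rw [h.diag, tmul_smul]
    rw [hx.col _ _ i hab, h.lt _ _ hab, h.gt _ _ hab]
    simp only [tmul_smul, tmul_sub, ← smul_tmul']
    match_scalars <;> field_simp <;> ring
  lt := by
    intro i j hij
    rw [coact_mul, coact_mul]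
    refine sum_sum_eq (C := R ⊗[k] B) (fun a => ?_) fun a b hab => ?_
    · rw [hx.row a _ _ hij, h.diag, tmul_smul, ← smul_tmul', smul_smul, inv_mul_cancel₀ hq, one_smul]
    rw [hx.mixed _ _ _ _ hab hij, hx.swap _ _ _ _ hab hij, h.lt _ _ hab, h.gt _ _ hab]
    simp only [tmul_smul, tmul_sub, add_tmul, ← smul_tmul']
    module
  gt := by
    intro i j hij
    rw [coact_mul, coact_mul, coact_mul]
    simp only [Finset.smul_sum, ← Finset.sum_sub_distrib]
    refine sum_sum_eq (C := R ⊗[k] B) (fun a => ?_) fun a b hab => ?_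
    · rw [hx.row a _ _ hij, h.diag]
      simp only [tmul_smul, ← smul_tmul']
      match_scalars <;> field_simp <;> ring
    rw [hx.mixed _ _ _ _ hab hij, hx.swap _ _ _ _ hab hij, h.lt _ _ hab, h.gt _ _ hab]
    simp only [tmul_smul, tmul_sub, add_tmul, ← smul_tmul']
    match_scalars <;> field_simp <;> ring

end Coaction

/-! ### Quantum minors as coefficients of the coaction -/

section Expansion

open TensorProduct Algebra.TensorProduct

variable {k : Type*} [Field k] {n : ℕ} {q : k} {R : Type*} [Ring R] [Algebra k R]
  {x : Fin n → Fin n → R} {B : Type*} [Ring B] [Algebra k B]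
  {e e' : Fin n → B}

/-- The quantum minor `[I|J]` of a matrix `x` over an arbitrary algebra. -/
def qm (q : k) (x : Fin n → Fin n → R) (I J : Finset (Fin n)) : R :=
  if h : I.card = J.card then
    ∑ σ : Equiv.Perm (Fin I.card),
      ((-q) ^ inversions σ) •
        (List.ofFn fun l : Fin I.card =>
          x (↑((I.orderIsoOfFin rfl) (σ l))) (↑((J.orderIsoOfFin h.symm) l))).prod
  else 0

/-- The number of inversions of a word. -/
def wordInv {t : ℕ} (w : Fin t → Fin n) : ℕ :=
  (Finset.univ.filter fun p : Fin t × Fin t => p.1 < p.2 ∧ w p.2 < w p.1).card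

lemma eprod_eq_ofFn (e : Fin n → B) {J : Finset (Fin n)} {m : ℕ} (h : J.card = m) :
    eprod e J = (List.ofFn fun l => e (J.orderIsoOfFin h l)).prod := by
  subst h
  unfold eprod
  congr 1
  refine List.ext_getElem (by simp) fun i h1 h2 => ?_
  simp [Finset.orderEmbOfFin_apply]

lemma prod_coact (t : ℕ) (c : Fin t → Fin n) :
    (List.ofFn fun l => coact k x e (c l)).prod =
      ∑ w : Fin t → Fin n, (List.ofFn fun l => x (w l) (c l)).prod ⊗ₜ[k]
        (List.ofFn fun l => e (w l)).prod := by
  induction t with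
  | zero => simp [Algebra.TensorProduct.one_def]
  | succ t ih =>
    rw [← (Fin.consEquiv fun _ => Fin n).sum_comp, Fintype.sum_prod_type, List.ofFn_succ,
      List.prod_cons, ih, coact, Finset.sum_mul_sum]
    refine Finset.sum_congr rfl fun a _ => Finset.sum_congr rfl fun w _ => ?_
    simp [List.ofFn_succ, Fin.consEquiv]

lemma wordInv_cons {t : ℕ} (a : Fin n) (w : Fin t → Fin n) (hw : Function.Injective w) :
    wordInv (Fin.cons a w : Fin (t + 1) → Fin n) =
      ((Finset.univ.image w).filter (· < a)).card + wordInv w := by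
  have h1 : ((Finset.univ.image w).filter (· < a)).card =
      (Finset.univ.filter fun l => w l < a).card := by
    rw [Finset.filter_image, Finset.card_image_of_injective _ hw]
  rw [h1]
  unfold wordInv
  rw [Finset.card_filter, Finset.card_filter, Finset.card_filter, Fintype.sum_prod_type,
    Fintype.sum_prod_type, Fin.sum_univ_succ]
  congr 1
  · rw [Fin.sum_univ_succ]
    simp
  · refine Finset.sum_congr rfl fun i _ => ?_
    rw [Fin.sum_univ_succ]
    simp

/-- Sorting a word in the `e_i`: each inversion costs a factor `-q`, and repeated letters give `0`. -/
lemma QAnti.prod_word (he : QAnti q e) {t : ℕ} (w : Fin t → Fin n) :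
    (List.ofFn fun l => e (w l)).prod =
      if Function.Injective w then (-q) ^ wordInv w • eprod e (Finset.univ.image w) else 0 := by
  induction t with
  | zero =>
    rw [if_pos (Function.injective_of_subsingleton w)]
    simp [wordInv]
  | succ t ih =>
    obtain ⟨a, w, rfl⟩ : ∃ a v, w = Fin.cons a v := ⟨w 0, Fin.tail w, (Fin.cons_self_tail w).symm⟩
    have himg : Finset.univ.image (Fin.cons a w : Fin (t + 1) → Fin n) =
        insert a (Finset.univ.image w) := by
      ext y
      simp [Fin.exists_fin_succ, eq_comm]
    rw [List.ofFn_succ, List.prod_cons]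
    simp only [Fin.cons_zero, Fin.cons_succ, ih, Fin.cons_injective_iff]
    by_cases hw : Function.Injective w
    · rw [if_pos hw, mul_smul_comm]
      by_cases ha : a ∈ Finset.univ.image w
      · rw [he.mul_eprod_of_mem ha, if_neg (by simpa using fun y hy => by simp_all), smul_zero]
      · rw [if_pos ⟨by simpa using ha, hw⟩, he.mul_eprod ha, smul_smul, himg, wordInv_cons a w hw,
          pow_add, mul_comm]
    · rw [if_neg hw, if_neg (fun h => hw h.2), mul_zero]

/-- The quantum minor as a sum over injective words with a prescribed set of letters. -/
def wordSum (q : k) (x : Fin n → Fin n → R) (I J : Finset (Fin n)) (m : ℕ) (h : J.card = m) : R :=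
  ∑ w : Fin m → Fin n, if Function.Injective w ∧ Finset.univ.image w = I then
    (-q) ^ wordInv w • (List.ofFn fun l => x (w l) (J.orderIsoOfFin h l)).prod else 0

lemma wordSum_congr (I J : Finset (Fin n)) {m : ℕ} (h : J.card = m) :
    wordSum q x I J J.card rfl = wordSum q x I J m h := by
  subst h; rfl

lemma qm_eq_wordSum (I J : Finset (Fin n)) : qm q x I J = wordSum q x I J J.card rfl := by
  unfold qm
  split_ifs with h
  · rw [wordSum_congr I J h.symm]
    unfold wordSum
    rw [← Finset.sum_filter]
    refine Finset.sum_bij (fun σ _ l => (I.orderIsoOfFin rfl (σ l) : Fin n)) ?_ ?_ ?_ ?_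
    · intro σ _
      simp only [Finset.mem_filter, Finset.mem_univ, true_and]
      refine ⟨fun a b hab => σ.injective ((I.orderIsoOfFin rfl).injective (Subtype.ext hab)), ?_⟩
      ext y
      simp only [Finset.mem_image, Finset.mem_univ, true_and]
      constructor
      · rintro ⟨l, rfl⟩
        exact (I.orderIsoOfFin rfl (σ l)).2
      · intro hy
        refine ⟨σ.symm ((I.orderIsoOfFin rfl).symm ⟨y, hy⟩), ?_⟩
        simp
    · intro σ _ τ _ hst
      ext l
      have := congrFun hst l
      exact congrArg Fin.val ((I.orderIsoOfFin rfl).injective (Subtype.ext this))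
    · intro w hw
      simp only [Finset.mem_filter, Finset.mem_univ, true_and] at hw
      obtain ⟨hw1, hw2⟩ := hw
      have hmem : ∀ l, w l ∈ I := fun l => hw2 ▸ Finset.mem_image_of_mem w (Finset.mem_univ l)
      have hinj : Function.Injective fun l => (I.orderIsoOfFin rfl).symm ⟨w l, hmem l⟩ := by
        intro a b hab
        exact hw1 (Subtype.ext_iff.1 ((I.orderIsoOfFin rfl).symm.injective hab))
      refine ⟨Equiv.ofBijective _ (Finite.injective_iff_bijective.1 hinj), Finset.mem_univ _, ?_⟩
      funext l
      simp
    · intro σ _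
      congr 2
      unfold inversions wordInv
      congr 1
      ext p
      simp
  · unfold wordSum
    refine (Finset.sum_eq_zero fun w _ => if_neg ?_).symm
    rintro ⟨h1, rfl⟩
    exact h (by rw [Finset.card_image_of_injective _ h1, Finset.card_univ, Fintype.card_fin])

/-- The coaction on an ordered monomial is given by quantum minors. -/
lemma eprod_coact (he : QAnti q e) (J : Finset (Fin n)) :
    eprod (coact k x e) J = ∑ I, qm q x I J ⊗ₜ[k] eprod e I := by
  rw [eprod_eq_ofFn _ (rfl : J.card = J.card), prod_coact]
  simp only [qm_eq_wordSum, wordSum, sum_tmul]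
  rw [Finset.sum_comm]
  refine Finset.sum_congr rfl fun w _ => ?_
  rw [he.prod_word]
  split_ifs with h
  · rw [Finset.sum_eq_single (Finset.univ.image w)]
    · rw [if_pos ⟨h, rfl⟩, tmul_smul, smul_tmul']
    · intro I _ hI
      rw [if_neg (fun hh => hI hh.2.symm), zero_tmul]
    · intro hh; exact absurd (Finset.mem_univ _) hh
  · simp [h]

end Expansion

/-! ### Comparison of coefficients -/

section Comparison

universe u

open TensorProduct Algebra.TensorProduct

variable {k : Type*} [Field k] {n : ℕ} {q : k}

lemma snat_self (X Y : Finset (Fin n)) : snat n X Y X = Y := by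
  ext y; simp only [snat, Finset.mem_union, Finset.mem_inter, Finset.mem_sdiff]; tauto

lemma self_mem_adm (X Y : Finset (Fin n)) : X ∈ adm X Y :=
  mem_adm.2 ⟨Finset.subset_union_left, Finset.inter_subset_left, rfl⟩

/-- The passage `(I, M) ↦ (S, S♮)` is symmetric: it is inverted by a passage of the same kind. -/
lemma adm_symm {I M S T : Finset (Fin n)} (h : S ∈ adm I M) (hT : snat n I M S = T) :
    I ∈ adm S T ∧ snat n S T I = M ∧ S ∩ T = I ∩ M := by
  subst hT
  obtain ⟨h1, h2, h3⟩ := mem_adm.1 h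
  have key : ∀ y, (y ∈ S → y ∈ I ∨ y ∈ M) ∧ (y ∈ I ∧ y ∈ M → y ∈ S) := fun y =>
    ⟨fun hy => Finset.mem_union.1 (h1 hy), fun hy => h2 (Finset.mem_inter.2 hy)⟩
  refine ⟨mem_adm.2 ⟨fun y hy => ?_, fun y hy => ?_, h3.symm⟩, ?_, ?_⟩
  · have := key y
    simp only [snat, Finset.mem_union, Finset.mem_inter, Finset.mem_sdiff] at hy ⊢; tauto
  · have := key y
    simp only [snat, Finset.mem_union, Finset.mem_inter, Finset.mem_sdiff] at hy ⊢; tauto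
  · ext y
    have := key y
    simp only [snat, Finset.mem_union, Finset.mem_inter, Finset.mem_sdiff]; tauto
  · ext y
    have := key y
    simp only [snat, Finset.mem_union, Finset.mem_inter, Finset.mem_sdiff]; tauto

/-- The coefficient `μ̃_S` is the coefficient `λ̃_I` attached to the pair `(S, S♮)`. -/
lemma lam_snat {I M S : Finset (Fin n)} (h : S ∈ adm I M) :
    lam q S (snat n I M S) I =
      (-(q - q⁻¹)) ^ (S \ I).card * (-q) ^ (-(Lnat n S I M)) * xiq k n q (S \ I) (I \ S) := by
  unfold lam Lfun Lnat
  rw [(adm_symm h rfl).2.1, Finset.union_comm (I \ M)]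

/-- When the terms with `S ≰ X` vanish, the sum over all admissible sets is the term at `X` plus the
sum over `S_<(X,Y)`. -/
lemma sum_adm_lt {C : Type*} [AddCommMonoid C] (X Y : Finset (Fin n))
    (F : Finset (Fin n) → C) (hF : ∀ S ∈ adm X Y, ¬ setLE n S X → F S = 0) :
    ∑ S ∈ adm X Y, F S = F X + ∑ S ∈ sLT n X Y, F S := by
  rw [← Finset.add_sum_erase _ _ (self_mem_adm X Y)]
  congr 1
  symm
  refine Finset.sum_subset (fun S hS => ?_) fun S hS hS' => hF S (Finset.mem_of_mem_erase hS) ?_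
  · simp only [sLT, sLE, Finset.mem_filter, Finset.mem_powerset] at hS
    exact Finset.mem_erase.2 ⟨hS.2, mem_adm.2 ⟨hS.1.1, hS.1.2.1, hS.1.2.2.1⟩⟩
  · obtain ⟨h0, h⟩ := Finset.mem_erase.1 hS
    obtain ⟨h1, h2, h3⟩ := mem_adm.1 h
    simp only [sLT, sLE, Finset.mem_filter, Finset.mem_powerset] at hS'
    tauto

lemma sum_adm_gt {C : Type*} [AddCommMonoid C] (X Y : Finset (Fin n))
    (F : Finset (Fin n) → C) (hF : ∀ S ∈ adm X Y, ¬ setLE n X S → F S = 0) :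
    ∑ S ∈ adm X Y, F S = F X + ∑ S ∈ sGT n X Y, F S := by
  rw [← Finset.add_sum_erase _ _ (self_mem_adm X Y)]
  congr 1
  symm
  refine Finset.sum_subset (fun S hS => ?_) fun S hS hS' => hF S (Finset.mem_of_mem_erase hS) ?_
  · simp only [sGT, sGE, Finset.mem_filter, Finset.mem_powerset] at hS
    exact Finset.mem_erase.2 ⟨hS.2, mem_adm.2 ⟨hS.1.1, hS.1.2.1, hS.1.2.2.1⟩⟩
  · obtain ⟨h0, h⟩ := Finset.mem_erase.1 hS
    obtain ⟨h1, h2, h3⟩ := mem_adm.1 h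
    simp only [sGT, sGE, Finset.mem_filter, Finset.mem_powerset] at hS'
    tauto

/-- The coefficient of `e'_M e_I` in `e_S e'_T`, up to the scalar `q^{|I ∩ M|}`. -/
lemma coeff_straighten {B : Type*} [Ring B] [Algebra k B] {e e' : Fin n → B} (h : QExt q e e')
    (hq : q ≠ 0) {φ : Finset (Fin n) → Finset (Fin n) → B →ₗ[k] k}
    (hφ : ∀ M I M' I' : Finset (Fin n),
      φ M I (eprod e' M' * eprod e I') = if M' = M ∧ I' = I then 1 else 0)
    (M I S T : Finset (Fin n)) :
    q ^ (I ∩ M).card * φ M I (eprod e S * eprod e' T) =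
      if S ∈ adm I M ∧ snat n I M S = T then lam q S T I else 0 := by
  have h1 : q ^ (S ∩ T).card * φ M I (eprod e S * eprod e' T) =
      if I ∈ adm S T ∧ snat n S T I = M then lam q S T I else 0 := by
    rw [← smul_eq_mul, ← map_smul, h.straighten hq, map_sum]
    simp only [map_smul, hφ, smul_eq_mul, mul_ite, mul_one, mul_zero]
    rw [← Finset.sum_filter]
    split_ifs with hc
    · rw [show (adm S T).filter (fun a => snat n S T a = M ∧ a = I) = {I} from ?_,
        Finset.sum_singleton]
      ext a
      simp only [Finset.mem_filter, Finset.mem_singleton]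
      constructor
      · exact fun ha => ha.2.2
      · rintro rfl; exact ⟨hc.1, hc.2, rfl⟩
    · refine Finset.sum_eq_zero fun a ha => ?_
      obtain ⟨ha1, ha2, rfl⟩ := Finset.mem_filter.1 ha
      exact absurd ⟨ha1, ha2⟩ hc
  by_cases hc : S ∈ adm I M ∧ snat n I M S = T
  · obtain ⟨h2, h3, h4⟩ := adm_symm hc.1 hc.2
    rw [if_pos hc, ← h4, h1, if_pos ⟨h2, h3⟩]
  · have hc' : ¬ (I ∈ adm S T ∧ snat n S T I = M) := fun hh =>
      hc ⟨(adm_symm hh.1 hh.2).1, (adm_symm hh.1 hh.2).2.1⟩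
    rw [if_neg hc'] at h1
    rw [if_neg hc, (mul_eq_zero.1 h1).resolve_left (pow_ne_zero _ hq), mul_zero]

/-- The commutation relation, in an arbitrary algebra containing a quantum matrix and with both
sides written as sums over all admissible sets. -/
lemma commutation {k : Type u} [Field k] {q : k} {R : Type*} [Ring R] [Algebra k R]
    {x : Fin n → Fin n → R} (hx : QMatrix q x) (hq : q ≠ 0) (I J M N : Finset (Fin n)) :
    q ^ (J ∩ N).card • ∑ S ∈ adm I M,
        lam q S (snat n I M S) I • (qm q x S J * qm q x (snat n I M S) N) =
      q ^ (I ∩ M).card • ∑ T ∈ adm J N,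
        lam q J N T • (qm q x M (snat n J N T) * qm q x I T) := by
  obtain ⟨B, _, _, e, e', h, φ, hφ⟩ := exists_model hq n
  -- the coefficient of `e'_M e_I`
  let Φ : R ⊗[k] B →ₗ[k] R := (TensorProduct.rid k R).toLinearMap ∘ₗ (φ M I).lTensor R
  have hΦ : ∀ r b, Φ (r ⊗ₜ b) = φ M I b • r := fun r b => by simp [Φ]
  have hR : ∀ S T, Φ (eprod (coact k x e') S * eprod (coact k x e) T) =
      qm q x M S * qm q x I T := by
    intro S T
    rw [eprod_coact h.right, eprod_coact h.left, Finset.sum_mul_sum]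
    simp only [map_sum, tmul_mul_tmul, hΦ, hφ, ite_smul, one_smul, zero_smul, ite_and]
    simp
  have hL : q ^ (I ∩ M).card • Φ (eprod (coact k x e) J * eprod (coact k x e') N) =
      ∑ S ∈ adm I M, lam q S (snat n I M S) I • (qm q x S J * qm q x (snat n I M S) N) := by
    rw [eprod_coact h.left, eprod_coact h.right, Finset.sum_mul_sum]
    simp only [map_sum, tmul_mul_tmul, hΦ, Finset.smul_sum, smul_smul,
      coeff_straighten h hq hφ, ite_smul, zero_smul, ite_and]
    simp
  -- the coacted generators satisfy the same straightening law
  have hs := congrArg Φ ((h.coact hx hq).straighten hq J N)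
  rw [map_smul, map_sum] at hs
  simp only [map_smul, hR] at hs
  rw [← hL, smul_comm, hs]

end Comparison

end QMat

/-- Theorem 5.6: the commutation relation (5.14). -/
theorem stmt17 (k : Type*) [Field k] (n : ℕ) (hn : 0 < n) (q : k) (hq : q ≠ 0)
    (I J M N : Finset (Fin n)) (hIJ : I.card = J.card) (hMN : M.card = N.card) :
    (q ^ (J ∩ N).card) • (qMinor k n q I J * qMinor k n q M N)
      + (q ^ (J ∩ N).card) •
          ∑ S ∈ sGT n I M,
            ((-(q - q⁻¹)) ^ (S \ I).card * (-q) ^ (-(Lnat n S I M)) *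
                xiq k n q (S \ I) (I \ S)) •
              (qMinor k n q S J * qMinor k n q (snat n I M S) N)
    = (q ^ (I ∩ M).card) • (qMinor k n q M N * qMinor k n q I J)
      + (q ^ (I ∩ M).card) •
          ∑ T ∈ sLT n J N,
            ((-(q - q⁻¹)) ^ (J \ T).card * (-q) ^ (-(Lfun n T J N)) *
                xiq k n q (J \ T) (T \ J)) •
              (qMinor k n q M (snat n J N T) * qMinor k n q I T) := by
  have h := commutation (qMatrix_X k n q) hq I J M N
  rw [sum_adm_gt, sum_adm_lt, snat_self, snat_self, lam_self, lam_self, one_smul, one_smul,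
    smul_add, smul_add] at h
  · rw [Finset.sum_congr rfl fun S hS => by
      rw [lam_snat (by
        simp only [sGT, sGE, Finset.mem_filter, Finset.mem_powerset] at hS
        exact mem_adm.2 ⟨hS.1.1, hS.1.2.1, hS.1.2.2.1⟩)]] at h
    exact h
  · intro T hT hle
    rw [lam_eq_zero (mem_adm.1 hT).2.2 hle, zero_smul]
  · intro S hS hle
    rw [lam_eq_zero (mem_adm.1 hS).2.2.symm hle, zero_smul]

end
end
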